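/- Let Q be a hereditary graph class with Q̂ nonempty, and let s = sup_{W∈Q̂} Ent(W). Then for every ε > 0 there exists N such that for all n ≥ N, 2^{(s-ε)·C(n,2)} ≤ |Q_n| ≤ 2^{(s+ε)·C(n,2)}, where |Q_n| is the number of labelled graphs on {1,…,n} in Q and C(n,2) = n(n-1)/2. -/

import Mathlib

open MeasureTheory Set Filter

noncomputable section

/-- A graphon: a symmetric measurable function `ℝ → ℝ → ℝ` with values in `[0,1]`
(only its values on `[0,1]²` matter). -/
def IsGraphon (W : ℝ → ℝ → ℝ) : Prop :=
  (∀ x y, W x y = W y x) ∧ Measurable (Function.uncurry W) ∧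
    ∀ x y, W x y ∈ Set.Icc (0 : ℝ) 1

/-- The cut norm `‖U‖_□`, the supremum over measurable `S, T ⊆ [0,1]` of
`|∫_{S×T} U|`. -/
def cutNorm (U : ℝ → ℝ → ℝ) : ℝ :=
  sSup { r : ℝ | ∃ S T : Set ℝ, MeasurableSet S ∧ MeasurableSet T ∧
    S ⊆ Set.Icc 0 1 ∧ T ⊆ Set.Icc 0 1 ∧
    r = |∫ p in S ×ˢ T, U p.1 p.2| }

/-- `d_□(W₁, W₂) = ‖W₁ - W₂‖_□`. -/
def dCut (W₁ W₂ : ℝ → ℝ → ℝ) : ℝ := cutNorm (fun x y => W₁ x y - W₂ x y)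

/-- A Lebesgue-measure-preserving map `[0,1] → [0,1]`. -/
def IsMPSelf (σ : ℝ → ℝ) : Prop :=
  MeasureTheory.MeasurePreserving σ
      (MeasureTheory.volume.restrict (Set.Icc (0:ℝ) 1))
      (MeasureTheory.volume.restrict (Set.Icc (0:ℝ) 1)) ∧
    Set.MapsTo σ (Set.Icc (0:ℝ) 1) (Set.Icc (0:ℝ) 1)

/-- The cut distance `δ_□(W₁, W₂)`. -/
def deltaCut (W₁ W₂ : ℝ → ℝ → ℝ) : ℝ :=
  sInf { r : ℝ | ∃ σ₁ σ₂ : ℝ → ℝ, IsMPSelf σ₁ ∧ IsMPSelf σ₂ ∧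
    r = cutNorm (fun x y => W₁ (σ₁ x) (σ₁ y) - W₂ (σ₂ x) (σ₂ y)) }

/-- The binary entropy function `h` (base-2 logarithm; `logb 2 0 = 0` by convention,
so `h 0 = h 1 = 0`). -/
def binEnt (x : ℝ) : ℝ := -x * Real.logb 2 x - (1 - x) * Real.logb 2 (1 - x)

/-- `h̃ x = h (min x (1/2))`. -/
def htilde (x : ℝ) : ℝ := binEnt (min x (1/2))

/-- The entropy `Ent(W) = ∫₀¹∫₀¹ h(W(x,y)) dx dy` of a graphon. -/
def graphonEnt (W : ℝ → ℝ → ℝ) : ℝ :=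
  ∫ x in Set.Icc (0:ℝ) 1, ∫ y in Set.Icc (0:ℝ) 1, binEnt (W x y)

open Classical in
/-- The graphon `W_G` of a simple graph `G` on `{1, …, n}` (vertices as `Fin n`,
vertex `i : Fin n` representing `i+1`): `W_G x y = 1` iff `⌈nx⌉⌈ny⌉ ∈ E(G)`. -/
def graphonOfGraph {n : ℕ} (G : SimpleGraph (Fin n)) : ℝ → ℝ → ℝ := fun x y =>
  if ∃ i j : Fin n, G.Adj i j ∧ ⌈(n : ℝ) * x⌉ = ((i : ℕ) : ℤ) + 1 ∧
      ⌈(n : ℝ) * y⌉ = ((j : ℕ) : ℤ) + 1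
  then 1 else 0

/-- A labelled graph class: a set of graphs on `{1,…,n}` for each `n`. -/
abbrev GraphClass := ∀ n : ℕ, Set (SimpleGraph (Fin n))

/-- A graph class is closed under relabelling by permutations. -/
def IsGraphClass (Q : GraphClass) : Prop :=
  ∀ (n : ℕ) (π : Equiv.Perm (Fin n)) (G : SimpleGraph (Fin n)),
    G ∈ Q n → G.comap ⇑π ∈ Q n

/-- A hereditary graph class: a graph class closed under taking induced subgraphs
(relabelled by the order-preserving bijection). -/
def IsHereditary (Q : GraphClass) : Prop :=
  IsGraphClass Q ∧
    ∀ (m n : ℕ) (f : Fin m → Fin n), StrictMono f →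
      ∀ G ∈ Q n, G.comap f ∈ Q m

/-- `Q̂`: the set of graphons which are limits (in cut distance) of sequences of graphs in
the class `Q` whose orders tend to infinity. -/
def limitSet (Q : GraphClass) : Set (ℝ → ℝ → ℝ) :=
  { W | IsGraphon W ∧
    ∃ (nk : ℕ → ℕ) (Gk : ∀ k, SimpleGraph (Fin (nk k))),
      (∀ k, Gk k ∈ Q (nk k)) ∧ Filter.Tendsto nk Filter.atTop Filter.atTop ∧
      Filter.Tendsto (fun k => deltaCut (graphonOfGraph (Gk k)) W) Filter.atTop (nhds 0) }

/-- `C(n,2) = n(n-1)/2` as a real number. -/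
def choose2 (n : ℕ) : ℝ := (n : ℝ) * ((n : ℝ) - 1) / 2

open Classical in
/-- The step function `E[W | P]` obtained by averaging `W` over the products of the
parts of the partition `P` of `[0,1]`. -/
def condExpPart {k : ℕ} (P : Fin k → Set ℝ) (W : ℝ → ℝ → ℝ) : ℝ → ℝ → ℝ := fun x y =>
  ∑ i : Fin k, ∑ j : Fin k,
    if x ∈ P i ∧ y ∈ P j then ⨍ p in (P i) ×ˢ (P j), W p.1 p.2 else 0

/-- `W̄_n`: the step function of `W` for the partition of `[0,1]` into `n` consecutive
intervals of length `1/n`. -/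
def barStep (n : ℕ) (W : ℝ → ℝ → ℝ) : ℝ → ℝ → ℝ :=
  condExpPart (fun i : Fin n => Set.Ioc (((i : ℕ) : ℝ)/n) ((((i : ℕ) : ℝ) + 1)/n)) W

/-- `N̂_□(n, δ; W)`: the number of graphs `G` on `{1,…,n}` with `d_□(W_G, W) ≤ δ`. -/
def NhatCut (n : ℕ) (δ : ℝ) (W : ℝ → ℝ → ℝ) : ℕ :=
  Nat.card {G : SimpleGraph (Fin n) // dCut (graphonOfGraph G) W ≤ δ}

/-- `N_□(n, δ; W)`: the number of graphs `G` on `{1,…,n}` with `δ_□(W_G, W) ≤ δ`. -/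
def NCut (n : ℕ) (δ : ℝ) (W : ℝ → ℝ → ℝ) : ℕ :=
  Nat.card {G : SimpleGraph (Fin n) // deltaCut (graphonOfGraph G) W ≤ δ}

open Classical in
/-- The induced density `p(F; W)` of a graph `F` on `{1,…,k}` in a graphon `W`. -/
def inducedDensity {k : ℕ} (F : SimpleGraph (Fin k)) (W : ℝ → ℝ → ℝ) : ℝ :=
  ∫ x : Fin k → ℝ in Set.univ.pi (fun _ : Fin k => Set.Icc (0:ℝ) 1),
    ∏ i : Fin k, ∏ j : Fin k,
      if i < j then (if F.Adj i j then W (x i) (x j) else 1 - W (x i) (x j)) else 1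

open Classical in
/-- The randomness support graphon `1_{rand(W)}` of `W`. -/
def randIndicator (W : ℝ → ℝ → ℝ) : ℝ → ℝ → ℝ := fun x y =>
  if 0 < W x y ∧ W x y < 1 then 1 else 0

/-- A kernel `U` is `K_r`-free if `∏_{i<j} U(x_i, x_j) = 0` for a.e. `x ∈ [0,1]^r`. -/
def KFree (r : ℕ) (U : ℝ → ℝ → ℝ) : Prop :=
  ∀ᵐ x ∂(MeasureTheory.volume.restrict (Set.univ.pi fun _ : Fin r => Set.Icc (0:ℝ) 1)),
    (∏ i : Fin r, ∏ j : Fin r, if i < j then U (x i) (x j) else 1) = 0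

open Classical in
/-- The graphon `W^{(r,s)}`: equal to `1/2` off the diagonal blocks, `1` on the first `s`
diagonal blocks `I_i × I_i`, and `0` on the remaining diagonal blocks. -/
def Wrs (r s : ℕ) : ℝ → ℝ → ℝ := fun x y =>
  if ∃ i j : Fin r, i ≠ j ∧ x ∈ Set.Ioc (((i:ℕ):ℝ)/r) ((((i:ℕ):ℝ)+1)/r) ∧
      y ∈ Set.Ioc (((j:ℕ):ℝ)/r) ((((j:ℕ):ℝ)+1)/r)
  then 1/2
  else if ∃ i : Fin r, (i:ℕ) < s ∧ x ∈ Set.Ioc (((i:ℕ):ℝ)/r) ((((i:ℕ):ℝ)+1)/r) ∧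
      y ∈ Set.Ioc (((i:ℕ):ℝ)/r) ((((i:ℕ):ℝ)+1)/r)
  then 1 else 0

/-- `E_r = ⋃_{i ≠ j} I_i × I_j` where `I_i`, `i = 1, …, r`, are the consecutive
intervals of length `1/r` in `[0,1]`. -/
def Er (r : ℕ) : Set (ℝ × ℝ) :=
  ⋃ (i : Fin r) (j : Fin r) (_ : i ≠ j),
    (Set.Ioc (((i:ℕ):ℝ)/r) ((((i:ℕ):ℝ)+1)/r)) ×ˢ (Set.Ioc (((j:ℕ):ℝ)/r) ((((j:ℕ):ℝ)+1)/r))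

/-- `R_r`: the set of graphons equal to `1/2` on `E_r` and `{0,1}`-valued elsewhere
on `[0,1]²`. -/
def Rset (r : ℕ) : Set (ℝ → ℝ → ℝ) :=
  { W | IsGraphon W ∧ (∀ p ∈ Er r, W p.1 p.2 = 1/2) ∧
      ∀ p ∈ ((Set.Icc (0:ℝ) 1) ×ˢ (Set.Icc (0:ℝ) 1)) \ Er r,
        W p.1 p.2 = 0 ∨ W p.1 p.2 = 1 }

/-- A graphon is random-free if it is `{0,1}`-valued a.e. on `[0,1]²`. -/
def IsRandomFree (W : ℝ → ℝ → ℝ) : Prop :=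
  ∀ᵐ p ∂(MeasureTheory.volume.restrict ((Set.Icc (0:ℝ) 1) ×ˢ (Set.Icc (0:ℝ) 1))),
    W (Prod.fst p) (Prod.snd p) = 0 ∨ W (Prod.fst p) (Prod.snd p) = 1



open MeasureTheory Set Filter


/-! ### Finite averaging -/

/-- average of `A` over the fiber of `C` above `k`. -/
def favg {ι κ : Type*} [Fintype ι] [DecidableEq κ] (A : ι → ℝ) (C : ι → κ) (k : κ) : ℝ :=
  (∑ q with C q = k, A q) / ((Finset.univ.filter (fun q => C q = k)).card : ℝ)

lemma favg_sum {ι κ : Type*} [Fintype ι] [DecidableEq κ] (A : ι → ℝ) (C : ι → κ) (ψ : κ → ℝ) :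
    ∑ q, A q * ψ (C q) = ∑ q, favg A C (C q) * ψ (C q) := by
  classical
  have hm : ∀ x ∈ (Finset.univ : Finset ι), C x ∈ Finset.univ.image C := fun x _ =>
    Finset.mem_image_of_mem _ (Finset.mem_univ x)
  rw [← Finset.sum_fiberwise_of_maps_to hm, ← Finset.sum_fiberwise_of_maps_to hm]
  refine Finset.sum_congr rfl fun k hk => ?_
  have h1 : ∑ q with C q = k, A q * ψ (C q) = (∑ q with C q = k, A q) * ψ k := by
    rw [Finset.sum_mul]
    refine Finset.sum_congr rfl fun q hq => ?_
    rw [(Finset.mem_filter.1 hq).2]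
  have h2 : ∑ q with C q = k, favg A C (C q) * ψ (C q)
      = ∑ q with C q = k, favg A C k * ψ k := by
    refine Finset.sum_congr rfl fun q hq => ?_
    rw [(Finset.mem_filter.1 hq).2]
  rw [h1, h2, Finset.sum_const, nsmul_eq_mul]
  obtain ⟨x, -, hx⟩ := Finset.mem_image.1 hk
  have hc : ((Finset.univ.filter (fun q => C q = k)).card : ℝ) ≠ 0 := by
    have : 0 < (Finset.univ.filter (fun q => C q = k)).card :=
      Finset.card_pos.2 ⟨x, by simp [hx]⟩
    positivity
  unfold favg
  field_simp

lemma favg_mem {ι κ : Type*} [Fintype ι] [DecidableEq κ] (A : ι → ℝ) (C : ι → κ) (k : κ)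
    (hA : ∀ q, A q ∈ Set.Icc (0:ℝ) 1) : favg A C k ∈ Set.Icc (0:ℝ) 1 := by
  unfold favg
  constructor
  · exact div_nonneg (Finset.sum_nonneg fun q _ => (hA q).1) (Nat.cast_nonneg _)
  · refine div_le_one_of_le₀ ?_ (Nat.cast_nonneg _)
    calc _ ≤ ∑ q with C q = k, (1:ℝ) := Finset.sum_le_sum fun q _ => (hA q).2
      _ = _ := by simp

/-- orthogonality of nested averages -/
lemma favg_orth {ι κ κ' : Type*} [Fintype ι] [DecidableEq κ] [DecidableEq κ'] (A : ι → ℝ)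
    (C : ι → κ) (C' : ι → κ') (r : κ → κ') (hr : ∀ q, C' q = r (C q)) :
    ∑ q, (favg A C (C q) - favg A C' (C' q)) ^ 2
      = ∑ q, (favg A C (C q)) ^ 2 - ∑ q, (favg A C' (C' q)) ^ 2 := by
  have h1 := favg_sum A C (fun k => favg A C' (r k))
  have h2 := favg_sum A C' (fun k => favg A C' k)
  simp only [← hr] at h1
  have h3 : ∑ q, favg A C (C q) * favg A C' (C' q) = ∑ q, favg A C' (C' q) * favg A C' (C' q) := by
    rw [← h1, h2]
  have h4 : ∑ q, (favg A C (C q) - favg A C' (C' q)) ^ 2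
      = ∑ q, (favg A C (C q)) ^ 2 - 2 * ∑ q, favg A C (C q) * favg A C' (C' q)
        + ∑ q, (favg A C' (C' q)) ^ 2 := by
    rw [Finset.mul_sum, ← Finset.sum_sub_distrib, ← Finset.sum_add_distrib]
    exact Finset.sum_congr rfl fun q _ => by ring
  rw [h4, h3]
  simp only [← pow_two]
  ring

lemma favg_cut {ι κ κ' : Type*} [Fintype ι] [DecidableEq κ] [DecidableEq κ'] (A : ι → ℝ)
    (C : ι → κ) (C' : ι → κ') (r : κ → κ') (hr : ∀ q, C' q = r (C q)) (ψ : κ → ℝ)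
    (hψ : ∀ k, ψ k ^ 2 ≤ 1) :
    (∑ q, (A q - favg A C' (C' q)) * ψ (C q)) ^ 2
      ≤ (Fintype.card ι : ℝ) * (∑ q, (favg A C (C q)) ^ 2 - ∑ q, (favg A C' (C' q)) ^ 2) := by
  have h1 : ∑ q, (A q - favg A C' (C' q)) * ψ (C q)
      = ∑ q, (favg A C (C q) - favg A C' (C' q)) * ψ (C q) := by
    simp only [sub_mul, Finset.sum_sub_distrib]
    rw [favg_sum A C ψ]
  rw [h1, ← favg_orth A C C' r hr]
  refine (Finset.sum_mul_sq_le_sq_mul_sq _ _ _).trans ?_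
  rw [mul_comm]
  refine mul_le_mul_of_nonneg_right ?_ (Finset.sum_nonneg fun q _ => sq_nonneg _)
  calc _ ≤ ∑ q : ι, (1:ℝ) := Finset.sum_le_sum fun q _ => hψ _
    _ = _ := by simp

/-! ### The greedy chain of colourings -/

/-- The pair colouring. -/
def pcol {n : ℕ} (c : Fin n → ℕ) (p : Fin n × Fin n) : ℕ × ℕ := (c p.1, c p.2)

/-- The cut functional. -/
def cutf {n : ℕ} (A : Fin n × Fin n → ℝ) (c : Fin n → ℕ)
    (ST : Finset (Fin n) × Finset (Fin n)) : ℝ :=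
  ∑ p, (A p - favg A (pcol c) (pcol c p)) *
    ((if p.1 ∈ ST.1 then 1 else 0) * (if p.2 ∈ ST.2 then 1 else 0))

lemma exists_max_cut {n : ℕ} (A : Fin n × Fin n → ℝ) (c : Fin n → ℕ) :
    ∃ ST : Finset (Fin n) × Finset (Fin n), ∀ ST', |cutf A c ST'| ≤ |cutf A c ST| :=
  Finite.exists_max _

/-- one refinement step -/
def refineCol {n : ℕ} (c : Fin n → ℕ) (ST : Finset (Fin n) × Finset (Fin n)) (v : Fin n) : ℕ :=
  4 * c v + (2 * (if v ∈ ST.1 then 1 else 0) + (if v ∈ ST.2 then 1 else 0))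

lemma refineCol_bit1 {n : ℕ} (c : Fin n → ℕ) (ST : Finset (Fin n) × Finset (Fin n)) (v : Fin n) :
    (refineCol c ST v / 2) % 2 = 1 ↔ v ∈ ST.1 := by
  unfold refineCol
  by_cases h1 : v ∈ ST.1 <;> by_cases h2 : v ∈ ST.2 <;> simp only [h1, h2, if_true, if_false, iff_true, iff_false] <;> omega

lemma refineCol_bit2 {n : ℕ} (c : Fin n → ℕ) (ST : Finset (Fin n) × Finset (Fin n)) (v : Fin n) :
    refineCol c ST v % 2 = 1 ↔ v ∈ ST.2 := by
  unfold refineCol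
  by_cases h1 : v ∈ ST.1 <;> by_cases h2 : v ∈ ST.2 <;> simp only [h1, h2, if_true, if_false, iff_true, iff_false] <;> omega

/-- the greedy chain -/
def chain {n : ℕ} (A : Fin n × Fin n → ℝ) : ℕ → Fin n → ℕ
  | 0 => fun _ => 0
  | l + 1 => refineCol (chain A l) (Classical.choose (exists_max_cut A (chain A l)))

lemma chain_succ_div {n : ℕ} (A : Fin n × Fin n → ℝ) (l : ℕ) (v : Fin n) :
    chain A l v = chain A (l + 1) v / 4 := by
  simp only [chain, refineCol]
  split_ifs <;> omega

lemma chain_div {n : ℕ} (A : Fin n × Fin n → ℝ) (l d : ℕ) (v : Fin n) :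
    chain A l v = chain A (l + d) v / 4 ^ d := by
  induction d with
  | zero => simp
  | succ d ih =>
    rw [ih, chain_succ_div A (l + d), Nat.div_div_eq_div_mul, pow_succ, mul_comm 4]
    rfl

lemma chain_lt {n : ℕ} (A : Fin n × Fin n → ℝ) (l : ℕ) (v : Fin n) : chain A l v < 4 ^ l := by
  induction l with
  | zero => simp [chain]
  | succ l ih =>
    simp only [chain, refineCol, pow_succ]
    split_ifs <;> omega

lemma chain_cut {n : ℕ} (A : Fin n × Fin n → ℝ) (l : ℕ)
    (ST : Finset (Fin n) × Finset (Fin n)) :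
    (cutf A (chain A l) ST) ^ 2 ≤ (n:ℝ) ^ 2 *
      (∑ q, (favg A (pcol (chain A (l+1))) (pcol (chain A (l+1)) q)) ^ 2
        - ∑ q, (favg A (pcol (chain A l)) (pcol (chain A l) q)) ^ 2) := by
  have hmax := Classical.choose_spec (exists_max_cut A (chain A l))
  set ST0 := Classical.choose (exists_max_cut A (chain A l)) with hST0
  have h1 : (cutf A (chain A l) ST) ^ 2 ≤ (cutf A (chain A l) ST0) ^ 2 :=
    sq_le_sq.2 (hmax ST)
  refine h1.trans ?_
  have h2 := favg_cut A (pcol (chain A (l+1))) (pcol (chain A l)) (fun k => (k.1 / 4, k.2 / 4))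
    (fun q => by simp only [pcol, chain_succ_div A l])
    (fun k => (if (k.1 / 2) % 2 = 1 then 1 else 0) * (if k.2 % 2 = 1 then 1 else 0))
    (fun k => by split_ifs <;> norm_num)
  have hcard : (Fintype.card (Fin n × Fin n) : ℝ) = (n:ℝ)^2 := by
    simp [pow_two]
  rw [hcard] at h2
  refine le_trans (le_of_eq ?_) h2
  congr 1
  unfold cutf
  refine Finset.sum_congr rfl fun q _ => ?_
  congr 1
  simp only [pcol, chain, ← hST0]
  congr 1
  · simp only [refineCol_bit1]
  · simp only [refineCol_bit2]

/-- bilinear extension to weights -/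
lemma lin_max {n : ℕ} (a s : Fin n → ℝ) (hs : ∀ i, s i ∈ Set.Icc (0:ℝ) 1) :
    ∃ S : Finset (Fin n), ∑ i, a i * s i ≤ ∑ i, a i * (if i ∈ S then 1 else 0) := by
  refine ⟨Finset.univ.filter (fun i => 0 < a i), Finset.sum_le_sum fun i _ => ?_⟩
  have := hs i
  simp only [Finset.mem_filter, Finset.mem_univ, true_and]
  split_ifs with h
  · nlinarith [this.2]
  · nlinarith [this.1]

lemma bilin_max {n : ℕ} (B : Fin n × Fin n → ℝ) (s t : Fin n → ℝ)
    (hs : ∀ i, s i ∈ Set.Icc (0:ℝ) 1) (ht : ∀ i, t i ∈ Set.Icc (0:ℝ) 1) :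
    ∃ S T : Finset (Fin n), ∑ p, B p * (s p.1 * t p.2)
      ≤ ∑ p, B p * ((if p.1 ∈ S then 1 else 0) * (if p.2 ∈ T then 1 else 0)) := by
  obtain ⟨S, hS⟩ := lin_max (fun i => ∑ j, B (i,j) * t j) s hs
  obtain ⟨T, hT⟩ := lin_max (fun j => ∑ i, B (i,j) * (if i ∈ S then 1 else 0)) t ht
  refine ⟨S, T, ?_⟩
  calc _ = ∑ i, (∑ j, B (i,j) * t j) * s i := by
        rw [Fintype.sum_prod_type]
        simp only [Finset.sum_mul]
        exact Finset.sum_congr rfl fun i _ => Finset.sum_congr rfl fun j _ => by ring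
    _ ≤ _ := hS
    _ = ∑ j, (∑ i, B (i,j) * (if i ∈ S then 1 else 0)) * t j := by
        simp only [Finset.sum_mul]
        rw [Finset.sum_comm]
        exact Finset.sum_congr rfl fun i _ => Finset.sum_congr rfl fun j _ => by ring
    _ ≤ _ := hT
    _ = _ := by
        rw [Fintype.sum_prod_type]
        simp only [Finset.sum_mul]
        rw [Finset.sum_comm]
        exact Finset.sum_congr rfl fun i _ => Finset.sum_congr rfl fun j _ => by ring

lemma bilin_bound {n : ℕ} (B : Fin n × Fin n → ℝ) (K : ℝ)
    (hB : ∀ S T : Finset (Fin n),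
      (∑ p, B p * ((if p.1 ∈ S then 1 else 0) * (if p.2 ∈ T then 1 else 0))) ^ 2 ≤ K)
    (s t : Fin n → ℝ)
    (hs : ∀ i, s i ∈ Set.Icc (0:ℝ) 1) (ht : ∀ i, t i ∈ Set.Icc (0:ℝ) 1) :
    (∑ p, B p * (s p.1 * t p.2)) ^ 2 ≤ K := by
  have hK : 0 ≤ K := (sq_nonneg _).trans (hB ∅ ∅)
  obtain ⟨S, T, h1⟩ := bilin_max B s t hs ht
  obtain ⟨S', T', h2⟩ := bilin_max (fun p => - B p) s t hs ht
  have h3 := Real.le_sqrt_of_sq_le (hB S T)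
  have h4 := Real.le_sqrt_of_sq_le (by
    rw [neg_sq]; exact hB S' T' : (-(∑ p, B p * ((if p.1 ∈ S' then 1 else 0) * (if p.2 ∈ T' then 1 else 0)))) ^ 2 ≤ K)
  simp only [neg_mul, Finset.sum_neg_distrib] at h2
  rw [← Real.sq_sqrt hK]
  exact sq_le_sq' (by linarith) (by linarith)



open Classical in
/-- adjacency matrix as a real function on pairs -/
def adjR {n : ℕ} (G : SimpleGraph (Fin n)) (p : Fin n × Fin n) : ℝ :=
  if G.Adj p.1 p.2 then 1 else 0

lemma adjR_mem {n : ℕ} (G : SimpleGraph (Fin n)) (p : Fin n × Fin n) :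
    adjR G p ∈ Set.Icc (0:ℝ) 1 := by
  unfold adjR; split_ifs <;> simp

lemma adjR_swap {n : ℕ} (G : SimpleGraph (Fin n)) (p : Fin n × Fin n) :
    adjR G p.swap = adjR G p := by
  unfold adjR
  have : G.Adj p.swap.1 p.swap.2 ↔ G.Adj p.1 p.2 := G.adj_comm _ _
  by_cases h : G.Adj p.1 p.2
  · rw [if_pos h, if_pos (this.2 h)]
  · rw [if_neg h, if_neg (fun h' => h (this.1 h'))]

lemma favg_equiv {ι κ : Type*} [Fintype ι] [DecidableEq κ] (A : ι → ℝ) (C : ι → κ)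
    (e : ι ≃ ι) (k : κ) : favg (fun q => A (e q)) (fun q => C (e q)) k = favg A C k := by
  unfold favg
  congr 1
  · simp only [Finset.sum_filter]
    exact Equiv.sum_comp e (fun q => if C q = k then A q else 0)
  · congr 1
    simp only [Finset.card_filter]
    exact Equiv.sum_comp e (fun q => if C q = k then 1 else 0)

lemma favg_swap {n : ℕ} (G : SimpleGraph (Fin n)) (c : Fin n → ℕ) (a b : ℕ) :
    favg (adjR G) (pcol c) (a, b) = favg (adjR G) (pcol c) (b, a) := by
  rw [← favg_equiv (adjR G) (pcol c) (Equiv.prodComm _ _)]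
  simp only [Equiv.prodComm_apply, adjR_swap]
  unfold favg
  have : ∀ q : Fin n × Fin n, pcol c q.swap = (a, b) ↔ pcol c q = (b, a) := by
    intro q; simp [pcol, and_comm]
  simp only [this]

lemma favg_eq_zero {ι κ : Type*} [Fintype ι] [DecidableEq κ] (A : ι → ℝ) (C : ι → κ)
    (hA : ∀ q, 0 ≤ A q) (q : ι) (h : favg A C (C q) = 0) : A q = 0 := by
  unfold favg at h
  have hc : ((Finset.univ.filter (fun q' => C q' = C q)).card : ℝ) ≠ 0 := by
    have : 0 < (Finset.univ.filter (fun q' => C q' = C q)).card :=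
      Finset.card_pos.2 ⟨q, by simp⟩
    positivity
  rw [div_eq_zero_iff, or_iff_left hc, Finset.sum_eq_zero_iff_of_nonneg (fun q _ => hA q)] at h
  exact h q (by simp)

lemma favg_one_sub {ι κ : Type*} [Fintype ι] [DecidableEq κ] (A : ι → ℝ) (C : ι → κ) (q : ι) :
    favg (fun x => 1 - A x) C (C q) = 1 - favg A C (C q) := by
  unfold favg
  have hc : ((Finset.univ.filter (fun q' => C q' = C q)).card : ℝ) ≠ 0 := by
    have : 0 < (Finset.univ.filter (fun q' => C q' = C q)).card :=
      Finset.card_pos.2 ⟨q, by simp⟩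
    positivity
  rw [Finset.sum_sub_distrib, sub_div]
  simp [hc]

lemma sum_pairs {n : ℕ} (g : Fin n × Fin n → ℝ) (hs : ∀ p, g p.swap = g p)
    (hd : ∀ i, g (i, i) ≤ 0) :
    ∑ p, g p ≤ 2 * ∑ p : {p : Fin n × Fin n // p.1 < p.2}, g p.1 := by
  have h0 : ∑ p : {p : Fin n × Fin n // p.1 < p.2}, g p.1
      = ∑ p : Fin n × Fin n, if p.1 < p.2 then g p else 0 := by
    rw [← Finset.sum_filter]
    exact (Finset.sum_subtype _ (by simp) g).symm
  have h1 : ∑ p : Fin n × Fin n, (if p.2 < p.1 then g p else 0)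
      = ∑ p : Fin n × Fin n, if p.1 < p.2 then g p else 0 := by
    rw [← Equiv.sum_comp (Equiv.prodComm (Fin n) (Fin n))]
    refine Finset.sum_congr rfl fun p _ => ?_
    simp [hs]
  calc ∑ p, g p ≤ ∑ p : Fin n × Fin n, ((if p.1 < p.2 then g p else 0)
        + (if p.2 < p.1 then g p else 0)) := by
        refine Finset.sum_le_sum fun p _ => ?_
        rcases lt_trichotomy p.1 p.2 with h | h | h
        · simp [h, h.le, h.not_gt]
        · have := hd p.1
          have hp : p = (p.1, p.1) := by ext <;> simp [h]
          rw [← hp] at this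
          simpa [h] using this
        · simp [h, h.le, h.not_gt]
    _ = _ := by rw [Finset.sum_add_distrib, h1, h0]; ring

lemma sum_bool_prod {P : Type*} [Fintype P] [DecidableEq P] (q : P → ℝ) :
    ∑ F : P → Bool, ∏ p, (if F p then q p else 1 - q p) = 1 := by
  have := Finset.prod_univ_sum (fun _ : P => (Finset.univ : Finset Bool))
    (fun p b => if b then q p else 1 - q p)
  rw [Fintype.piFinset_univ] at this
  rw [← this]
  simp

lemma logb_nonpos_of_mem {x : ℝ} (hx : x ∈ Set.Icc (0:ℝ) 1) : Real.logb 2 x ≤ 0 :=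
  Real.logb_nonpos (by norm_num) hx.1 hx.2

open Classical in
lemma weight_lower {n : ℕ} (G : SimpleGraph (Fin n)) (c : Fin n → ℕ) :
    (2:ℝ) ^ (-(∑ p, binEnt (favg (adjR G) (pcol c) (pcol c p)) / 2)) ≤
      ∏ p : {p : Fin n × Fin n // p.1 < p.2},
        (if G.Adj p.1.1 p.1.2 then favg (adjR G) (pcol c) (pcol c p.1)
          else 1 - favg (adjR G) (pcol c) (pcol c p.1)) := by
  set q : Fin n × Fin n → ℝ := fun p => favg (adjR G) (pcol c) (pcol c p) with hq
  have hqm : ∀ p, q p ∈ Set.Icc (0:ℝ) 1 := fun p => favg_mem _ _ _ (adjR_mem G)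
  have hq1 : ∀ p, 1 - q p ∈ Set.Icc (0:ℝ) 1 := fun p => by
    have := hqm p; exact ⟨by linarith [this.2], by linarith [this.1]⟩
  set g : Fin n × Fin n → ℝ := fun p => if G.Adj p.1 p.2 then Real.logb 2 (q p)
    else Real.logb 2 (1 - q p) with hg
  have hne : ∀ p, 0 < (if G.Adj p.1 p.2 then q p else 1 - q p) := by
    intro p
    split_ifs with h
    · refine lt_of_le_of_ne (hqm p).1 (fun h0 => ?_)
      have := favg_eq_zero (adjR G) (pcol c) (fun x => (adjR_mem G x).1) p h0.symm
      simp [adjR, h] at this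
    · refine lt_of_le_of_ne (hq1 p).1 (fun h0 => ?_)
      have := favg_eq_zero (fun x => 1 - adjR G x) (pcol c)
        (fun x => by linarith [(adjR_mem G x).2]) p (by rw [favg_one_sub]; exact h0.symm)
      simp [adjR, h] at this
  have hqs : ∀ p, q p.swap = q p := fun p => favg_swap G c _ _
  have hgs : ∀ p, g p.swap = g p := by
    intro p
    simp only [hg, hqs, Prod.fst_swap, Prod.snd_swap, G.adj_comm]
  have hgd : ∀ i, g (i,i) ≤ 0 := by
    intro i
    simp only [hg, SimpleGraph.irrefl, if_false]
    exact logb_nonpos_of_mem (hq1 _)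
  have hsum : ∑ p, g p = - ∑ p, binEnt (q p) := by
    have h1 := favg_sum (adjR G) (pcol c) (fun k => Real.logb 2 (favg (adjR G) (pcol c) k)
      - Real.logb 2 (1 - favg (adjR G) (pcol c) k))
    have h2 : ∀ p, g p = adjR G p * (Real.logb 2 (q p) - Real.logb 2 (1 - q p))
        + Real.logb 2 (1 - q p) := by
      intro p; simp only [hg, adjR]; split_ifs <;> ring
    have h3 : ∀ p, -binEnt (q p) = q p * (Real.logb 2 (q p) - Real.logb 2 (1 - q p))
        + Real.logb 2 (1 - q p) := by
      intro p; unfold binEnt; ring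
    rw [← Finset.sum_neg_distrib]
    simp only [h2, h3, Finset.sum_add_distrib]
    exact congrArg (· + _) h1
  have hpr : ∏ p : {p : Fin n × Fin n // p.1 < p.2},
        (if G.Adj p.1.1 p.1.2 then q p.1 else 1 - q p.1)
      = (2:ℝ) ^ (∑ p : {p : Fin n × Fin n // p.1 < p.2}, g p.1) := by
    rw [Real.rpow_sum_of_pos (by norm_num)]
    refine Finset.prod_congr rfl fun p _ => ?_
    have : g p.1 = Real.logb 2 (if G.Adj p.1.1 p.1.2 then q p.1 else 1 - q p.1) := by
      simp only [hg]; split_ifs <;> rfl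
    rw [this, Real.rpow_logb (by norm_num) (by norm_num) (hne p.1)]
  change _ ≤ ∏ p : {p : Fin n × Fin n // p.1 < p.2},
        (if G.Adj p.1.1 p.1.2 then q p.1 else 1 - q p.1)
  rw [hpr]
  refine Real.rpow_le_rpow_of_exponent_le (by norm_num) ?_
  have := sum_pairs g hgs hgd
  rw [← Finset.sum_div]
  change -((∑ p, binEnt (q p)) / 2) ≤ _
  linarith

open Classical in
lemma class_card {n : ℕ} (𝒢 : Finset (SimpleGraph (Fin n))) (c : Fin n → ℕ) (q : Fin n × Fin n → ℝ)
    (hq : ∀ p, q p ∈ Set.Icc (0:ℝ) 1)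
    (h : ∀ G ∈ 𝒢, ∀ p, favg (adjR G) (pcol c) (pcol c p) = q p) :
    (𝒢.card : ℝ) ≤ (2:ℝ) ^ (∑ p, binEnt (q p) / 2) := by
  set w : ({p : Fin n × Fin n // p.1 < p.2} → Bool) → ℝ := fun F =>
    ∏ p, (if F p then q p.1 else 1 - q p.1) with hw
  have hw0 : ∀ F, 0 ≤ w F := by
    intro F
    refine Finset.prod_nonneg fun p _ => ?_
    have := hq p.1
    split_ifs
    · exact this.1
    · linarith [this.2]
  set φ : SimpleGraph (Fin n) → ({p : Fin n × Fin n // p.1 < p.2} → Bool) := fun G p =>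
    decide (G.Adj p.1.1 p.1.2) with hφ
  have hinj : Function.Injective φ := by
    intro G H hGH
    have key : ∀ i j, i < j → (G.Adj i j ↔ H.Adj i j) := by
      intro i j hij
      have := congrFun hGH ⟨(i,j), hij⟩
      simpa [hφ] using this
    ext i j
    rcases lt_trichotomy i j with hij | hij | hij
    · exact key i j hij
    · subst hij; simp
    · rw [G.adj_comm, H.adj_comm]; exact key j i hij
  have hle : ∑ G ∈ 𝒢, w (φ G) ≤ 1 := by
    rw [← Finset.sum_image (f := w) (fun a _ b _ hab => hinj hab)]
    rw [← sum_bool_prod (fun p : {p : Fin n × Fin n // p.1 < p.2} => q p.1)]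
    exact Finset.sum_le_sum_of_subset_of_nonneg (Finset.subset_univ _) (fun F _ _ => hw0 F)
  have hge : ∀ G ∈ 𝒢, (2:ℝ) ^ (-(∑ p, binEnt (q p) / 2)) ≤ w (φ G) := by
    intro G hG
    have h1 := weight_lower G c
    simp only [h G hG] at h1
    simpa [hw, hφ] using h1
  have h2 : (𝒢.card : ℝ) * (2:ℝ) ^ (-(∑ p, binEnt (q p) / 2)) ≤ 1 := by
    rw [← nsmul_eq_mul]
    exact (Finset.card_nsmul_le_sum _ _ _ hge).trans hle
  rwa [Real.rpow_neg (by norm_num), ← div_eq_mul_inv, div_le_one (by positivity)] at h2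

/-- the data type for pigeonholing -/
abbrev PData (n L : ℕ) : Type :=
  (Fin n → Fin (4 ^ L)) × (Fin (L + 1) → Fin (4 ^ L) → Fin (4 ^ L) → Fin (n * n + 1))

open Classical in
/-- edge counts -/
def ecount {n : ℕ} (G : SimpleGraph (Fin n)) (c : Fin n → ℕ) (k : ℕ × ℕ) : ℕ :=
  (Finset.univ.filter (fun q : Fin n × Fin n => pcol c q = k ∧ G.Adj q.1 q.2)).card

lemma ecount_lt {n : ℕ} (G : SimpleGraph (Fin n)) (c : Fin n → ℕ) (k : ℕ × ℕ) :
    ecount G c k < n * n + 1 := by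
  classical
  unfold ecount
  refine Nat.lt_succ_of_le ((Finset.card_le_univ _).trans ?_)
  simp

lemma favg_ecount {n : ℕ} (G : SimpleGraph (Fin n)) (c : Fin n → ℕ) (k : ℕ × ℕ) :
    favg (adjR G) (pcol c) k = (ecount G c k : ℝ) /
      ((Finset.univ.filter (fun q => pcol c q = k)).card : ℝ) := by
  classical
  unfold favg ecount
  congr 1
  simp only [adjR, Finset.sum_ite, Finset.sum_const_zero, add_zero, Finset.sum_const, nsmul_eq_mul,
    mul_one, Finset.filter_filter]

/-- data of a graph -/
def pdata (n L : ℕ) (G : SimpleGraph (Fin n)) : PData n L :=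
  (fun v => ⟨chain (adjR G) L v, chain_lt _ _ _⟩,
   fun l a b => ⟨ecount G (chain (adjR G) l) (a, b), ecount_lt _ _ _⟩)

lemma pdata_eq {n L : ℕ} {G H : SimpleGraph (Fin n)} (h : pdata n L G = pdata n L H) (l : ℕ)
    (hl : l ≤ L) : chain (adjR G) l = chain (adjR H) l ∧
      ∀ p, favg (adjR G) (pcol (chain (adjR H) l)) (pcol (chain (adjR H) l) p)
        = favg (adjR H) (pcol (chain (adjR H) l)) (pcol (chain (adjR H) l) p) := by
  have h1 : chain (adjR G) L = chain (adjR H) L := by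
    funext v
    have := congrFun (congrArg Prod.fst h) v
    simpa [pdata] using this
  have h2 : chain (adjR G) l = chain (adjR H) l := by
    funext v
    obtain ⟨d, rfl⟩ := Nat.exists_eq_add_of_le hl
    rw [chain_div (adjR G) l d, chain_div (adjR H) l d, h1]
  refine ⟨h2, fun p => ?_⟩
  rw [favg_ecount, favg_ecount]
  congr 2
  have hlt : ∀ v, chain (adjR H) l v < 4 ^ L := fun v =>
    (chain_lt _ _ _).trans_le (Nat.pow_le_pow_right (by norm_num) hl)
  have := congrFun (congrFun (congrFun (congrArg Prod.snd h) ⟨l, Nat.lt_succ_of_le hl⟩)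
    ⟨_, hlt p.1⟩) ⟨_, hlt p.2⟩
  simp only [pdata, Fin.mk.injEq, h2] at this
  exact this

lemma popular {n : ℕ} (L : ℕ) (Q : Set (SimpleGraph (Fin n))) (hne : Q.Nonempty) :
    ∃ G ∈ Q, ∀ l ≤ L, (Nat.card Q : ℝ) ≤ (Fintype.card (PData n L) : ℝ) *
      (2:ℝ) ^ (∑ p, binEnt (favg (adjR G) (pcol (chain (adjR G) l))
        (pcol (chain (adjR G) l) p)) / 2) := by
  classical
  set 𝒬 : Finset (SimpleGraph (Fin n)) := Q.toFinset with h𝒬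
  obtain ⟨G1, hG1⟩ := hne
  have : Nonempty (PData n L) := ⟨pdata n L G1⟩
  obtain ⟨k, hk⟩ := Finite.exists_max
    (fun k : PData n L => (𝒬.filter (fun G => pdata n L G = k)).card)
  have hcard : 𝒬.card ≤ Fintype.card (PData n L) * (𝒬.filter (fun G => pdata n L G = k)).card := by
    rw [Finset.card_eq_sum_card_fiberwise (f := pdata n L) (t := Finset.univ) (by simp)]
    refine (Finset.sum_le_card_nsmul _ _ _ (fun x _ => hk x)).trans ?_
    simp
  have hpos : 0 < (𝒬.filter (fun G => pdata n L G = k)).card := by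
    refine lt_of_lt_of_le ?_ (hk (pdata n L G1))
    exact Finset.card_pos.2 ⟨G1, by simp [h𝒬, hG1]⟩
  obtain ⟨G, hG⟩ := Finset.card_pos.1 hpos
  rw [Finset.mem_filter] at hG
  refine ⟨G, by simpa [h𝒬] using hG.1, fun l hl => ?_⟩
  have hcl := class_card (𝒬.filter (fun G => pdata n L G = k)) (chain (adjR G) l)
    (fun p => favg (adjR G) (pcol (chain (adjR G) l)) (pcol (chain (adjR G) l) p))
    (fun p => favg_mem _ _ _ (adjR_mem G))
    (fun H hH p => by
      rw [Finset.mem_filter] at hH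
      exact (pdata_eq (hH.2.trans hG.2.symm) l hl).2 p)
  have h3 : (Nat.card Q : ℝ) = (𝒬.card : ℝ) := by
    rw [Nat.card_eq_fintype_card, h𝒬, Set.toFinset_card]
  rw [h3]
  calc (𝒬.card : ℝ) ≤ (Fintype.card (PData n L) : ℝ) *
      ((𝒬.filter (fun G => pdata n L G = k)).card : ℝ) := by exact_mod_cast hcard
    _ ≤ _ := mul_le_mul_of_nonneg_left hcl (Nat.cast_nonneg _)

/-- The package of finite properties of a (sorted) graph. -/
structure Pack (n L : ℕ) (N : ℝ) (G : SimpleGraph (Fin n)) (c : ℕ → Fin n → ℕ) : Prop where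
  lt : ∀ l v, c l v < 4 ^ l
  div : ∀ l d v, c l v = c (l + d) v / 4 ^ d
  cut : ∀ l ST, (cutf (adjR G) (c l) ST) ^ 2 ≤ (n:ℝ) ^ 2 *
      (∑ q, (favg (adjR G) (pcol (c (l+1))) (pcol (c (l+1)) q)) ^ 2
        - ∑ q, (favg (adjR G) (pcol (c l)) (pcol (c l) q)) ^ 2)
  mono : ∀ l ≤ L, Monotone (c l)
  ent : ∀ l ≤ L, N ≤ (Fintype.card (PData n L) : ℝ) *
      (2:ℝ) ^ (∑ p, binEnt (favg (adjR G) (pcol (c l)) (pcol (c l) p)) / 2)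

lemma exists_pack (Q : GraphClass) (hQ : IsGraphClass Q) (n L : ℕ) (hne : (Q n).Nonempty) :
    ∃ G ∈ Q n, ∃ c, Pack n L (Nat.card (Q n)) G c := by
  obtain ⟨G, hG, hpop⟩ := popular L (Q n) hne
  set π : Equiv.Perm (Fin n) := Tuple.sort (chain (adjR G) L) with hπ
  have hmono := Tuple.monotone_sort (chain (adjR G) L)
  have hA : adjR (G.comap ⇑π) = fun p => adjR G ((Equiv.prodCongr π π) p) := by
    funext p; rfl
  have hC : ∀ l, pcol (fun v => chain (adjR G) l (π v)) =
      fun p => pcol (chain (adjR G) l) ((Equiv.prodCongr π π) p) := by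
    intro l; funext p; simp [pcol]
  have hF : ∀ l k, favg (adjR (G.comap ⇑π)) (pcol (fun v => chain (adjR G) l (π v))) k
      = favg (adjR G) (pcol (chain (adjR G) l)) k := by
    intro l k
    rw [hA, hC, favg_equiv]
  have hS : ∀ (φ : ℝ → ℝ) l, ∑ q, φ (favg (adjR (G.comap ⇑π))
      (pcol (fun v => chain (adjR G) l (π v))) (pcol (fun v => chain (adjR G) l (π v)) q))
      = ∑ q, φ (favg (adjR G) (pcol (chain (adjR G) l)) (pcol (chain (adjR G) l) q)) := by
    intro φ l
    simp only [hF]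
    simp only [hC]
    exact Equiv.sum_comp (Equiv.prodCongr π π)
      (fun q => φ (favg (adjR G) (pcol (chain (adjR G) l)) (pcol (chain (adjR G) l) q)))
  refine ⟨G.comap ⇑π, hQ n π G hG, fun l v => chain (adjR G) l (π v), ?_, ?_, ?_, ?_, ?_⟩
  · exact fun l v => chain_lt _ _ _
  · exact fun l d v => chain_div _ _ _ _
  · intro l ST
    rw [hS (fun x => x ^ 2) (l+1), hS (fun x => x ^ 2) l]
    refine le_trans (le_of_eq ?_) (chain_cut (adjR G) l (ST.1.map π.toEmbedding, ST.2.map π.toEmbedding))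
    congr 1
    unfold cutf
    simp only [hF]
    rw [← Equiv.sum_comp (Equiv.prodCongr π π) (fun p : Fin n × Fin n => (adjR G p - favg (adjR G) (pcol (chain (adjR G) l))
      (pcol (chain (adjR G) l) p)) * ((if p.1 ∈ ST.1.map π.toEmbedding then 1 else 0) *
        (if p.2 ∈ ST.2.map π.toEmbedding then 1 else 0)))]
    refine Finset.sum_congr rfl fun q _ => ?_
    rw [hA, hC]
    simp
  · intro l hl
    obtain ⟨d, rfl⟩ := Nat.exists_eq_add_of_le hl
    intro a b hab
    simp only
    rw [chain_div (adjR G) l d, chain_div (adjR G) l d]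
    exact Nat.div_le_div_right (hmono hab)
  · intro l hl
    rw [hS (fun x => binEnt x / 2) l]
    exact hpop l hl

lemma pdata_card (n L : ℕ) : (Fintype.card (PData n L) : ℝ) ≤
    (2:ℝ) ^ (((2 * L + 2 * ((L+1) * (4^L * 4^L)) : ℕ) : ℝ) * n) := by
  have h1 : Fintype.card (PData n L) = (4 ^ L) ^ n * (n * n + 1) ^ ((L+1) * (4^L * 4^L)) := by
    simp only [PData, Fintype.card_prod, Fintype.card_fun, Fintype.card_fin]
    congr 1
    rw [← pow_mul, ← pow_mul]
    congr 1; ring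
  have h2 : n * n + 1 ≤ 2 ^ (2 * n) := by
    have h : n < 2 ^ n := Nat.lt_two_pow_self
    rw [two_mul, pow_add]
    nlinarith
  have h3 : Fintype.card (PData n L) ≤ 2 ^ ((2 * L + 2 * ((L+1) * (4^L * 4^L))) * n) := by
    rw [h1, add_mul (2 * L), pow_add 2 (2 * L * n)]
    refine Nat.mul_le_mul ?_ ?_
    · rw [show (4:ℕ) ^ L = 2 ^ (2 * L) by rw [pow_mul]; norm_num, ← pow_mul]
    · refine (Nat.pow_le_pow_left h2 _).trans (le_of_eq ?_)
      rw [← pow_mul]; congr 1; ring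
  have : ((2:ℝ) ^ (((2 * L + 2 * ((L+1) * (4^L * 4^L)) : ℕ) : ℝ) * n)) =
      ((2 ^ ((2 * L + 2 * ((L+1) * (4^L * 4^L))) * n) : ℕ) : ℝ) := by
    rw [← Nat.cast_mul, Real.rpow_natCast]; norm_cast
  rw [this]
  exact_mod_cast h3



/-- Lebesgue measure on the unit interval -/
def nu : Measure ℝ := volume.restrict (Set.Icc (0:ℝ) 1)

instance nu_prob : IsProbabilityMeasure nu := ⟨by simp [nu]⟩

lemma nu_eq_Ioc : nu = volume.restrict (Set.Ioc (0:ℝ) 1) :=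
  (Measure.restrict_congr_set Ioc_ae_eq_Icc).symm

lemma ae_nu_Ioc : ∀ᵐ x ∂nu, x ∈ Set.Ioc (0:ℝ) 1 := by
  rw [nu_eq_Ioc]; exact ae_restrict_mem measurableSet_Ioc

lemma ae_nu2_Ioc : ∀ᵐ p ∂(nu.prod nu), p.1 ∈ Set.Ioc (0:ℝ) 1 ∧ p.2 ∈ Set.Ioc (0:ℝ) 1 := by
  have h1 : ∀ᵐ p ∂(nu.prod nu), p.1 ∈ Set.Ioc (0:ℝ) 1 :=
    Measure.quasiMeasurePreserving_fst.ae ae_nu_Ioc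
  have h2 : ∀ᵐ p ∂(nu.prod nu), p.2 ∈ Set.Ioc (0:ℝ) 1 :=
    Measure.quasiMeasurePreserving_snd.ae ae_nu_Ioc
  filter_upwards [h1, h2] with p a b using ⟨a, b⟩

/-- index of the grid cell -/
def idx (n : ℕ) [NeZero n] (x : ℝ) : Fin n := Fin.ofNat n (⌈(n:ℝ) * x⌉ - 1).toNat

lemma measurable_idx (n : ℕ) [NeZero n] : Measurable (idx n) := by
  have h : Measurable (fun k : ℤ => Fin.ofNat n (k - 1).toNat) := Measurable.of_discrete
  exact h.comp (Int.measurable_ceil.comp (measurable_const_mul (n:ℝ)))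

lemma idx_ceil (n : ℕ) [NeZero n] {x : ℝ} (hx : x ∈ Set.Ioc (0:ℝ) 1) :
    ⌈(n:ℝ) * x⌉ = ((idx n x : ℕ) : ℤ) + 1 := by
  have hn : (0:ℝ) < n := by exact_mod_cast Nat.pos_of_ne_zero (NeZero.ne n)
  have h1 : 0 < ⌈(n:ℝ) * x⌉ := Int.ceil_pos.2 (mul_pos hn hx.1)
  have h2 : ⌈(n:ℝ) * x⌉ ≤ n := Int.ceil_le.2 (by push_cast; nlinarith [hx.2])
  simp only [idx, Fin.val_ofNat]
  rw [Nat.mod_eq_of_lt (by omega)]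
  omega

lemma idx_eq_iff (n : ℕ) [NeZero n] {x : ℝ} (hx : x ∈ Set.Ioc (0:ℝ) 1) (i : Fin n) :
    idx n x = i ↔ ⌈(n:ℝ) * x⌉ = ((i : ℕ) : ℤ) + 1 := by
  rw [idx_ceil n hx, Fin.ext_iff]; omega

lemma graphonOfGraph_eq {n : ℕ} [NeZero n] (G : SimpleGraph (Fin n)) {x y : ℝ}
    (hx : x ∈ Set.Ioc (0:ℝ) 1) (hy : y ∈ Set.Ioc (0:ℝ) 1) :
    graphonOfGraph G x y = adjR G (idx n x, idx n y) := by
  unfold graphonOfGraph adjR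
  have : (∃ i j : Fin n, G.Adj i j ∧ ⌈(n : ℝ) * x⌉ = ((i : ℕ) : ℤ) + 1 ∧
      ⌈(n : ℝ) * y⌉ = ((j : ℕ) : ℤ) + 1) ↔ G.Adj (idx n x) (idx n y) := by
    constructor
    · rintro ⟨i, j, h, h1, h2⟩
      rw [← idx_eq_iff n hx] at h1
      rw [← idx_eq_iff n hy] at h2
      rwa [h1, h2]
    · exact fun h => ⟨_, _, h, idx_ceil n hx, idx_ceil n hy⟩
  by_cases h : G.Adj (idx n x) (idx n y)
  · rw [if_pos (this.2 h), if_pos h]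
  · rw [if_neg (fun h' => h (this.1 h')), if_neg h]

lemma nu_idx (n : ℕ) [NeZero n] (i : Fin n) : nu.real (idx n ⁻¹' {i}) = 1 / n := by
  have hn : (0:ℝ) < n := by exact_mod_cast Nat.pos_of_ne_zero (NeZero.ne n)
  rw [nu_eq_Ioc, measureReal_restrict_apply (measurable_idx n (measurableSet_singleton i))]
  have : idx n ⁻¹' {i} ∩ Set.Ioc 0 1 = Set.Ioc ((i:ℕ) / (n:ℝ)) (((i:ℕ) + 1) / (n:ℝ)) := by
    ext x
    simp only [Set.mem_inter_iff, Set.mem_preimage, Set.mem_singleton_iff]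
    have hi : ((i:ℕ):ℝ) + 1 ≤ n := by exact_mod_cast i.2
    have key : ⌈(n:ℝ) * x⌉ = ((i : ℕ) : ℤ) + 1 ↔
        x ∈ Set.Ioc ((i:ℕ) / (n:ℝ)) (((i:ℕ) + 1) / (n:ℝ)) := by
      rw [Int.ceil_eq_iff, Set.mem_Ioc, div_lt_iff₀ hn, le_div_iff₀ hn]
      push_cast
      rw [mul_comm x, add_sub_cancel_right]
    constructor
    · rintro ⟨h, hx⟩
      rw [← key, ← idx_eq_iff n hx]; exact h
    · intro h
      have hx : x ∈ Set.Ioc (0:ℝ) 1 := by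
        refine ⟨lt_of_le_of_lt (by positivity) h.1, h.2.trans ?_⟩
        rw [div_le_one hn]; exact hi
      exact ⟨(idx_eq_iff n hx i).2 (key.2 h), hx⟩
  rw [this, measureReal_def, Real.volume_Ioc, ENNReal.toReal_ofReal]
  · field_simp; ring
  · rw [← sub_div, add_sub_cancel_left]; positivity

/-- step function of a matrix -/
def stepF (n : ℕ) [NeZero n] (B : Fin n × Fin n → ℝ) : ℝ → ℝ → ℝ := fun x y =>
  B (idx n x, idx n y)

lemma stepF_graphon (n : ℕ) [NeZero n] (B : Fin n × Fin n → ℝ) (hs : ∀ p, B p.swap = B p)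
    (hB : ∀ p, B p ∈ Set.Icc (0:ℝ) 1) : IsGraphon (stepF n B) := by
  refine ⟨fun x y => ?_, ?_, fun x y => hB _⟩
  · exact (hs (idx n y, idx n x))
  · have h : Measurable B := Measurable.of_discrete
    exact h.comp (((measurable_idx n).comp measurable_fst).prodMk
      ((measurable_idx n).comp measurable_snd))

lemma integral_stepF_gen (n : ℕ) [NeZero n] (B : Fin n × Fin n → ℝ) (τ₁ τ₂ : Measure ℝ)
    [IsFiniteMeasure τ₁] [IsFiniteMeasure τ₂] :
    ∫ p, stepF n B p.1 p.2 ∂(τ₁.prod τ₂) =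
      ∑ p, B p * (τ₁.real (idx n ⁻¹' {p.1}) * τ₂.real (idx n ⁻¹' {p.2})) := by
  have hm : Measurable (fun p : ℝ × ℝ => (idx n p.1, idx n p.2)) :=
    ((measurable_idx n).comp measurable_fst).prodMk ((measurable_idx n).comp measurable_snd)
  have hB : Measurable B := Measurable.of_discrete
  have h1 := integral_map (μ := τ₁.prod τ₂) hm.aemeasurable (f := B) hB.aestronglyMeasurable
  change ∫ p, B (idx n p.1, idx n p.2) ∂(τ₁.prod τ₂) = _
  rw [← h1, integral_fintype Integrable.of_finite]
  refine Finset.sum_congr rfl fun p _ => ?_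
  rw [smul_eq_mul, mul_comm, map_measureReal_apply hm (measurableSet_singleton p)]
  congr 1
  have : (fun p : ℝ × ℝ => (idx n p.1, idx n p.2)) ⁻¹' {p}
      = (idx n ⁻¹' {p.1}) ×ˢ (idx n ⁻¹' {p.2}) := by
    ext q; simp [Prod.ext_iff]
  rw [this, measureReal_prod_prod]

lemma integral_stepF (n : ℕ) [NeZero n] (B : Fin n × Fin n → ℝ) :
    ∫ p, stepF n B p.1 p.2 ∂(nu.prod nu) = (∑ p, B p) / (n:ℝ) ^ 2 := by
  rw [integral_stepF_gen, Finset.sum_div]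
  refine Finset.sum_congr rfl fun p _ => ?_
  rw [nu_idx, nu_idx]; ring

lemma cut_stepF (n : ℕ) [NeZero n] (B : Fin n × Fin n → ℝ) (K : ℝ)
    (hB : ∀ S T : Finset (Fin n),
      (∑ p, B p * ((if p.1 ∈ S then 1 else 0) * (if p.2 ∈ T then 1 else 0))) ^ 2 ≤ K)
    (S T : Set ℝ) (hS : S ⊆ Set.Icc 0 1) (hT : T ⊆ Set.Icc 0 1) :
    (∫ p in S ×ˢ T, stepF n B p.1 p.2) ^ 2 ≤ K / (n:ℝ) ^ 4 := by
  have hn : (0:ℝ) < n := by exact_mod_cast Nat.pos_of_ne_zero (NeZero.ne n)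
  have key : ∀ S : Set ℝ, S ⊆ Set.Icc 0 1 → IsFiniteMeasure (volume.restrict S) ∧
      ∀ i, (n:ℝ) * (volume.restrict S).real (idx n ⁻¹' {i}) ∈ Set.Icc (0:ℝ) 1 := by
    intro S hS
    have hle : volume.restrict S ≤ nu := Measure.restrict_mono_set _ hS
    refine ⟨isFiniteMeasure_of_le nu hle, fun i => ⟨by positivity, ?_⟩⟩
    have h2 : (volume.restrict S).real (idx n ⁻¹' {i}) ≤ nu.real (idx n ⁻¹' {i}) :=
      ENNReal.toReal_mono (measure_ne_top _ _) (hle _)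
    rw [nu_idx] at h2
    calc _ ≤ (n:ℝ) * (1 / n) := mul_le_mul_of_nonneg_left h2 hn.le
      _ = 1 := by field_simp
  obtain ⟨f1, h1⟩ := key S hS
  obtain ⟨f2, h2⟩ := key T hT
  have h3 : (∫ p in S ×ˢ T, stepF n B p.1 p.2) = ∫ p, stepF n B p.1 p.2
      ∂((volume.restrict S).prod (volume.restrict T)) := by
    rw [Measure.prod_restrict]; rfl
  rw [h3, integral_stepF_gen]
  have h4 := bilin_bound B K hB _ _ h1 h2
  rw [le_div_iff₀ (by positivity)]
  refine le_trans (le_of_eq ?_) h4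
  have : ∑ p : Fin n × Fin n, B p * ((n:ℝ) * (volume.restrict S).real (idx n ⁻¹' {p.1})
      * ((n:ℝ) * (volume.restrict T).real (idx n ⁻¹' {p.2}))) = (n:ℝ)^2 * ∑ p : Fin n × Fin n, B p *
        ((volume.restrict S).real (idx n ⁻¹' {p.1}) * (volume.restrict T).real (idx n ⁻¹' {p.2})) := by
    rw [Finset.mul_sum]
    exact Finset.sum_congr rfl fun p _ => by ring
  rw [this]; ring

/-! ### Cut norm basics -/

lemma nu_prod_eq : nu.prod nu = volume.restrict (Set.Icc (0:ℝ) 1 ×ˢ Set.Icc (0:ℝ) 1) := by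
  rw [nu, Measure.prod_restrict]; rfl

lemma restrict_le_nu {S T : Set ℝ} (hS : S ⊆ Set.Icc 0 1) (hT : T ⊆ Set.Icc 0 1) :
    (volume : Measure (ℝ × ℝ)).restrict (S ×ˢ T) ≤ nu.prod nu := by
  rw [nu_prod_eq]; exact Measure.restrict_mono_set _ (Set.prod_mono hS hT)

lemma cutNorm_nonneg (U : ℝ → ℝ → ℝ) : 0 ≤ cutNorm U := by
  apply Real.sSup_nonneg
  rintro r ⟨S, T, -, -, -, -, rfl⟩
  exact abs_nonneg _

lemma cutNorm_le {U : ℝ → ℝ → ℝ} {K : ℝ}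
    (h : ∀ S T : Set ℝ, MeasurableSet S → MeasurableSet T → S ⊆ Set.Icc 0 1 → T ⊆ Set.Icc 0 1 →
      |∫ p in S ×ˢ T, U p.1 p.2| ≤ K) : cutNorm U ≤ K := by
  apply csSup_le
  · exact ⟨_, ∅, ∅, MeasurableSet.empty, MeasurableSet.empty, by simp, by simp, rfl⟩
  · rintro r ⟨S, T, h1, h2, h3, h4, rfl⟩
    exact h S T h1 h2 h3 h4

lemma abs_int_le {U : ℝ → ℝ → ℝ} (hU : Integrable (fun p : ℝ × ℝ => U p.1 p.2) (nu.prod nu))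
    {S T : Set ℝ} (hS : S ⊆ Set.Icc 0 1) (hT : T ⊆ Set.Icc 0 1) :
    |∫ p in S ×ˢ T, U p.1 p.2| ≤ ∫ p, |U p.1 p.2| ∂(nu.prod nu) := by
  refine (abs_integral_le_integral_abs).trans ?_
  exact integral_mono_measure (restrict_le_nu hS hT) (Eventually.of_forall fun _ => abs_nonneg _) hU.abs

lemma le_cutNorm {U : ℝ → ℝ → ℝ} (hU : Integrable (fun p : ℝ × ℝ => U p.1 p.2) (nu.prod nu))
    {S T : Set ℝ} (mS : MeasurableSet S) (mT : MeasurableSet T)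
    (hS : S ⊆ Set.Icc 0 1) (hT : T ⊆ Set.Icc 0 1) :
    |∫ p in S ×ˢ T, U p.1 p.2| ≤ cutNorm U := by
  apply le_csSup
  · refine ⟨∫ p, |U p.1 p.2| ∂(nu.prod nu), ?_⟩
    rintro r ⟨S, T, -, -, h3, h4, rfl⟩
    exact abs_int_le hU h3 h4
  · exact ⟨S, T, mS, mT, hS, hT, rfl⟩

lemma cutNorm_congr {U V : ℝ → ℝ → ℝ} (h : ∀ᵐ p ∂(nu.prod nu), U p.1 p.2 = V p.1 p.2) :
    cutNorm U = cutNorm V := by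
  have key : ∀ {U V : ℝ → ℝ → ℝ}, (∀ᵐ p ∂(nu.prod nu), U p.1 p.2 = V p.1 p.2) →
      ∀ S T : Set ℝ, S ⊆ Set.Icc 0 1 → T ⊆ Set.Icc 0 1 →
      ∫ p in S ×ˢ T, U p.1 p.2 = ∫ p in S ×ˢ T, V p.1 p.2 := by
    intro U V h S T hS hT
    exact integral_congr_ae (ae_mono (restrict_le_nu hS hT) h)
  unfold cutNorm
  congr 1
  ext r
  constructor
  · rintro ⟨S, T, h1, h2, h3, h4, rfl⟩
    exact ⟨S, T, h1, h2, h3, h4, by rw [key h S T h3 h4]⟩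
  · rintro ⟨S, T, h1, h2, h3, h4, rfl⟩
    exact ⟨S, T, h1, h2, h3, h4, by rw [key h S T h3 h4]⟩

lemma isMPSelf_id : IsMPSelf (fun x => x) := ⟨MeasurePreserving.id _, fun _ h => h⟩

lemma deltaCut_nonneg (U V : ℝ → ℝ → ℝ) : 0 ≤ deltaCut U V := by
  apply Real.sInf_nonneg
  rintro r ⟨_, _, -, -, rfl⟩
  exact cutNorm_nonneg _

lemma deltaCut_le (U V : ℝ → ℝ → ℝ) : deltaCut U V ≤ cutNorm (fun x y => U x y - V x y) := by
  apply csInf_le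
  · refine ⟨0, ?_⟩
    rintro r ⟨_, _, -, -, rfl⟩
    exact cutNorm_nonneg _
  · exact ⟨_, _, isMPSelf_id, isMPSelf_id, rfl⟩

lemma IsGraphon.meas {W : ℝ → ℝ → ℝ} (h : IsGraphon W) :
    Measurable (fun p : ℝ × ℝ => W p.1 p.2) := h.2.1

lemma IsGraphon.integrable {W : ℝ → ℝ → ℝ} (h : IsGraphon W) :
    Integrable (fun p : ℝ × ℝ => W p.1 p.2) (nu.prod nu) :=
  Integrable.of_bound h.meas.aestronglyMeasurable 1 (Eventually.of_forall fun p => by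
    have := h.2.2 p.1 p.2
    rw [Real.norm_eq_abs, abs_le]; constructor <;> linarith [this.1, this.2])

/-! ### Entropy function -/

lemma binEnt_eq (x : ℝ) : binEnt x = Real.binEntropy x / Real.log 2 := by
  unfold binEnt
  rw [Real.binEntropy_eq_negMulLog_add_negMulLog_one_sub]
  simp only [Real.negMulLog, Real.logb]
  ring

lemma continuous_binEnt : Continuous binEnt := by
  have : binEnt = fun x => Real.binEntropy x / Real.log 2 := funext binEnt_eq
  rw [this]
  exact Real.binEntropy_continuous.div_const _

lemma binEnt_le_one (x : ℝ) : binEnt x ≤ 1 := by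
  rw [binEnt_eq, div_le_one (Real.log_pos (by norm_num))]
  exact Real.binEntropy_le_log_two

lemma binEnt_nonneg {x : ℝ} (hx : x ∈ Set.Icc (0:ℝ) 1) : 0 ≤ binEnt x := by
  rw [binEnt_eq]
  exact div_nonneg (Real.binEntropy_nonneg hx.1 hx.2) (Real.log_pos (by norm_num)).le

lemma binEnt_integrable {W : ℝ → ℝ → ℝ} (h : IsGraphon W) :
    Integrable (fun p : ℝ × ℝ => binEnt (W p.1 p.2)) (nu.prod nu) :=
  Integrable.of_bound (continuous_binEnt.measurable.comp h.meas).aestronglyMeasurable 1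
    (Eventually.of_forall fun p => by
      rw [Real.norm_eq_abs, abs_of_nonneg (binEnt_nonneg (h.2.2 _ _))]; exact binEnt_le_one _)

lemma graphonEnt_eq {W : ℝ → ℝ → ℝ} (h : IsGraphon W) :
    graphonEnt W = ∫ p, binEnt (W p.1 p.2) ∂(nu.prod nu) := by
  rw [integral_prod _ (binEnt_integrable h)]; rfl

lemma graphonEnt_le_one {W : ℝ → ℝ → ℝ} (h : IsGraphon W) : graphonEnt W ≤ 1 := by
  rw [graphonEnt_eq h]
  calc _ ≤ ∫ p : ℝ × ℝ, (1:ℝ) ∂(nu.prod nu) :=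
        integral_mono (binEnt_integrable h) (integrable_const _) (fun p => binEnt_le_one _)
    _ = 1 := by simp



/-- pointwise limsup of graphons -/
def gsup (f : ℕ → ℝ → ℝ → ℝ) : ℝ → ℝ → ℝ := fun x y => limsup (fun m => f m x y) atTop

lemma gsup_graphon {f : ℕ → ℝ → ℝ → ℝ} (h : ∀ m, IsGraphon (f m)) : IsGraphon (gsup f) := by
  refine ⟨fun x y => ?_, ?_, fun x y => ?_⟩
  · unfold gsup
    congr 1
    funext m
    exact (h m).1 x y
  · exact Measurable.limsup (fun m => (h m).meas)
  · have hb : IsBoundedUnder (· ≤ ·) atTop (fun m => f m x y) :=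
      ⟨1, by simpa using ⟨0, fun m _ => ((h m).2.2 x y).2⟩⟩
    have hc : IsBoundedUnder (· ≥ ·) atTop (fun m => f m x y) :=
      ⟨0, by simpa using ⟨0, fun m _ => ((h m).2.2 x y).1⟩⟩
    constructor
    · exact le_limsup_of_frequently_le
        (Eventually.of_forall fun m => ((h m).2.2 x y).1).frequently hb
    · exact limsup_le_of_le hc.isCoboundedUnder_le (Eventually.of_forall fun m => ((h m).2.2 x y).2)

lemma gsup_tendsto {f : ℕ → ℝ → ℝ → ℝ}
    (h : ∀ᵐ p ∂(nu.prod nu), ∃ c, Tendsto (fun m => f m p.1 p.2) atTop (nhds c)) :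
    ∀ᵐ p ∂(nu.prod nu), Tendsto (fun m => f m p.1 p.2) atTop (nhds (gsup f p.1 p.2)) := by
  filter_upwards [h] with p hp
  obtain ⟨c, hc⟩ := hp
  have : gsup f p.1 p.2 = c := hc.limsup_eq
  rw [this]; exact hc

lemma phi_integrable {Φ : ℝ × ℝ → ℝ} (hΦ : Continuous Φ) {U V : ℝ → ℝ → ℝ} (hU : IsGraphon U)
    (hV : IsGraphon V) : Integrable (fun p : ℝ × ℝ => Φ (U p.1 p.2, V p.1 p.2)) (nu.prod nu) := by
  obtain ⟨K, hK⟩ := (isCompact_Icc.prod isCompact_Icc :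
    IsCompact (Set.Icc (0:ℝ) 1 ×ˢ Set.Icc (0:ℝ) 1)).exists_bound_of_continuousOn hΦ.continuousOn
  exact Integrable.of_bound (hΦ.measurable.comp (hU.meas.prodMk hV.meas)).aestronglyMeasurable K
    (Eventually.of_forall fun p => hK _ ⟨hU.2.2 _ _, hV.2.2 _ _⟩)

lemma dct2 {Φ : ℝ × ℝ → ℝ} (hΦ : Continuous Φ) {f g : ℕ → ℝ → ℝ → ℝ} {U V : ℝ → ℝ → ℝ}
    (hf : ∀ m, IsGraphon (f m)) (hg : ∀ m, IsGraphon (g m))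
    (h1 : ∀ᵐ p ∂(nu.prod nu), Tendsto (fun m => f m p.1 p.2) atTop (nhds (U p.1 p.2)))
    (h2 : ∀ᵐ p ∂(nu.prod nu), Tendsto (fun m => g m p.1 p.2) atTop (nhds (V p.1 p.2))) :
    Tendsto (fun m => ∫ p, Φ (f m p.1 p.2, g m p.1 p.2) ∂(nu.prod nu)) atTop
      (nhds (∫ p, Φ (U p.1 p.2, V p.1 p.2) ∂(nu.prod nu))) := by
  obtain ⟨K, hK⟩ := (isCompact_Icc.prod isCompact_Icc :
    IsCompact (Set.Icc (0:ℝ) 1 ×ˢ Set.Icc (0:ℝ) 1)).exists_bound_of_continuousOn hΦ.continuousOn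
  refine tendsto_integral_of_dominated_convergence (fun _ => K)
    (fun m => (phi_integrable hΦ (hf m) (hg m)).aestronglyMeasurable) (integrable_const _)
    (fun m => Eventually.of_forall fun p => hK _ ⟨(hf m).2.2 _ _, (hg m).2.2 _ _⟩) ?_
  filter_upwards [h1, h2] with p a b
  exact (hΦ.tendsto _).comp (a.prodMk_nhds b)

lemma analytic_limit (f : ℕ → ℕ → ℝ → ℝ → ℝ) (g : ℕ → ℝ → ℝ → ℝ) (r : ℕ → ℝ) (t : ℝ)
    (hf : ∀ l m, IsGraphon (f l m)) (hg : ∀ m, IsGraphon (g m))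
    (H1 : ∀ l, ∀ᵐ p ∂(nu.prod nu), ∃ c, Tendsto (fun m => f l m p.1 p.2) atTop (nhds c))
    (H2 : ∀ l k m, l ≤ k → ∫ p, (f k m p.1 p.2 - f l m p.1 p.2) ^ 2 ∂(nu.prod nu)
      = ∫ p, (f k m p.1 p.2) ^ 2 ∂(nu.prod nu) - ∫ p, (f l m p.1 p.2) ^ 2 ∂(nu.prod nu))
    (H3 : ∀ l m (S T : Set ℝ), S ⊆ Set.Icc 0 1 → T ⊆ Set.Icc 0 1 →
      (∫ p in S ×ˢ T, (g m p.1 p.2 - f l m p.1 p.2)) ^ 2 ≤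
      ∫ p, (f (l+1) m p.1 p.2) ^ 2 ∂(nu.prod nu) - ∫ p, (f l m p.1 p.2) ^ 2 ∂(nu.prod nu))
    (H4 : Tendsto r atTop (nhds t))
    (H5 : ∀ l, ∀ᶠ m in atTop, r m ≤ ∫ p, binEnt (f l m p.1 p.2) ∂(nu.prod nu)) :
    ∃ W, IsGraphon W ∧ Tendsto (fun m => cutNorm (fun x y => g m x y - W x y)) atTop (nhds 0) ∧
      t ≤ ∫ p, binEnt (W p.1 p.2) ∂(nu.prod nu) := by
  set U : ℕ → ℝ → ℝ → ℝ := fun l => gsup (f l) with hUdef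
  have hU : ∀ l, IsGraphon (U l) := fun l => gsup_graphon (hf l)
  have hT : ∀ l, ∀ᵐ p ∂(nu.prod nu), Tendsto (fun m => f l m p.1 p.2) atTop
    (nhds (U l p.1 p.2)) := fun l => gsup_tendsto (H1 l)
  have csq : Continuous (fun q : ℝ × ℝ => q.1 ^ 2) := by fun_prop
  have cds : Continuous (fun q : ℝ × ℝ => (q.1 - q.2) ^ 2) := by fun_prop
  have cab : Continuous (fun q : ℝ × ℝ => |q.1 - q.2|) := by fun_prop
  have cen : Continuous (fun q : ℝ × ℝ => binEnt q.1) := continuous_binEnt.comp continuous_fst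
  set E : ℕ → ℝ := fun l => ∫ p, (U l p.1 p.2) ^ 2 ∂(nu.prod nu) with hE
  have tE : ∀ l, Tendsto (fun m => ∫ p, (f l m p.1 p.2) ^ 2 ∂(nu.prod nu)) atTop (nhds (E l)) :=
    fun l => dct2 csq (hf l) (hf l) (hT l) (hT l)
  have dE : ∀ l k, l ≤ k → ∫ p, (U k p.1 p.2 - U l p.1 p.2) ^ 2 ∂(nu.prod nu) = E k - E l := by
    intro l k hlk
    have a := dct2 cds (hf k) (hf l) (hT k) (hT l)
    have b := (tE k).sub (tE l)
    refine tendsto_nhds_unique a (b.congr fun m => ?_)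
    exact (H2 l k m hlk).symm
  have mE : Monotone E := by
    intro l k hlk
    have := dE l k hlk
    have h0 : 0 ≤ ∫ p, (U k p.1 p.2 - U l p.1 p.2) ^ 2 ∂(nu.prod nu) :=
      integral_nonneg fun p => sq_nonneg _
    linarith
  have bE : ∀ l, E l ≤ 1 := by
    intro l
    calc E l ≤ ∫ p : ℝ × ℝ, (1:ℝ) ∂(nu.prod nu) := by
          refine integral_mono (phi_integrable csq (hU l) (hU l)) (integrable_const _) fun p => ?_
          have := (hU l).2.2 p.1 p.2
          simp only
          nlinarith [this.1, this.2]
      _ = 1 := by simp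
  obtain ⟨Ei, hEi⟩ : ∃ e, Tendsto E atTop (nhds e) :=
    ⟨_, tendsto_atTop_ciSup mE ⟨1, by rintro _ ⟨l, rfl⟩; exact bE l⟩⟩
  have leE : ∀ l, E l ≤ Ei := fun l => mE.ge_of_tendsto hEi l
  have entU : ∀ l, t ≤ ∫ p, binEnt (U l p.1 p.2) ∂(nu.prod nu) := by
    intro l
    exact le_of_tendsto_of_tendsto H4 (dct2 cen (hf l) (hf l) (hT l) (hT l)) (H5 l)
  obtain ⟨ψ, ψm, hψ⟩ := Filter.extraction_forall_of_eventually'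
    (P := fun j l => Ei - E l < (1/4:ℝ) ^ j) (fun j => by
      have h1 : ∀ᶠ l in atTop, Ei - (1/4:ℝ)^j < E l :=
        hEi.eventually (lt_mem_nhds (by linarith [show (0:ℝ) < (1/4)^j by positivity]))
      obtain ⟨N, hN⟩ := eventually_atTop.1 h1
      exact ⟨N, fun k hk => by linarith [hN k hk]⟩)
  have conv : ∀ᵐ p ∂(nu.prod nu), ∃ c, Tendsto (fun j => U (ψ j) p.1 p.2) atTop (nhds c) := by
    have := MeasureTheory.Lp.ae_tendsto_of_cauchy_eLpNorm (μ := nu.prod nu) (p := 2)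
      (f := fun j (p : ℝ × ℝ) => U (ψ j) p.1 p.2)
      (fun j => (hU (ψ j)).meas.aestronglyMeasurable) (by norm_num)
      (B := fun j => (1/2:ENNReal) ^ j) (by
        rw [ENNReal.tsum_geometric]; simp) ?_
    · exact this
    · intro N n m hn hm
      have main : ∫ p, (U (ψ n) p.1 p.2 - U (ψ m) p.1 p.2) ^ 2 ∂(nu.prod nu) < (1/4:ℝ)^N := by
        have hN := hψ N
        rcases le_total n m with h | h
        · have e : ∫ p, (U (ψ n) p.1 p.2 - U (ψ m) p.1 p.2) ^ 2 ∂(nu.prod nu)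
            = E (ψ m) - E (ψ n) := by
            rw [← dE _ _ (ψm.monotone h)]
            congr 1; funext p; ring
          rw [e]
          linarith [leE (ψ m), mE (ψm.monotone hn)]
        · rw [dE _ _ (ψm.monotone h)]
          linarith [leE (ψ n), mE (ψm.monotone hm)]
      have hmem : MemLp (fun p : ℝ × ℝ => U (ψ n) p.1 p.2 - U (ψ m) p.1 p.2) 2 (nu.prod nu) :=
        MemLp.of_bound ((hU _).meas.sub (hU _).meas).aestronglyMeasurable 1
          (Eventually.of_forall fun p => by
            have h1 := (hU (ψ n)).2.2 p.1 p.2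
            have h2 := (hU (ψ m)).2.2 p.1 p.2
            rw [Real.norm_eq_abs, abs_le]
            constructor <;> linarith [h1.1, h1.2, h2.1, h2.2])
      have e1 := hmem.eLpNorm_eq_integral_rpow_norm (by norm_num) (by norm_num)
      change eLpNorm (fun p : ℝ × ℝ => U (ψ n) p.1 p.2 - U (ψ m) p.1 p.2) 2 (nu.prod nu) < _
      rw [e1]
      have e2 : ((1/2:ENNReal)^N) = ENNReal.ofReal ((1/2:ℝ)^N) := by
        rw [ENNReal.ofReal_pow (by norm_num)]
        congr 1
        rw [ENNReal.ofReal_div_of_pos (by norm_num)]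
        simp
      rw [e2, ENNReal.ofReal_lt_ofReal_iff (by positivity)]
      have e3 : ∫ p : ℝ × ℝ, ‖U (ψ n) p.1 p.2 - U (ψ m) p.1 p.2‖ ^ (2:ENNReal).toReal ∂(nu.prod nu)
          = ∫ p, (U (ψ n) p.1 p.2 - U (ψ m) p.1 p.2) ^ 2 ∂(nu.prod nu) := by
        congr 1; funext p
        simp
      rw [e3]
      have e4 : (2:ENNReal).toReal⁻¹ = 1/2 := by norm_num
      rw [e4, ← Real.sqrt_eq_rpow, Real.sqrt_lt' (by positivity)]
      refine main.trans_le (le_of_eq ?_)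
      rw [← pow_mul, mul_comm, pow_mul]; norm_num
  set W := gsup (fun j => U (ψ j)) with hWdef
  have hW : IsGraphon W := gsup_graphon fun j => hU _
  have tW : ∀ᵐ p ∂(nu.prod nu), Tendsto (fun j => U (ψ j) p.1 p.2) atTop (nhds (W p.1 p.2)) :=
    gsup_tendsto conv
  refine ⟨W, hW, ?_, ?_⟩
  · have LW := dct2 cab (g := fun _ => W) (V := W) (fun j => hU (ψ j)) (fun _ => hW) tW
      (Eventually.of_forall fun p => tendsto_const_nhds)
    simp only [sub_self, abs_zero, integral_zero] at LW
    have LU : ∀ l, Tendsto (fun m => ∫ p, |f l m p.1 p.2 - U l p.1 p.2| ∂(nu.prod nu)) atTop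
        (nhds 0) := by
      intro l
      have := dct2 cab (g := fun _ => U l) (V := U l) (hf l) (fun _ => hU l) (hT l)
        (Eventually.of_forall fun p => tendsto_const_nhds)
      simpa using this
    rw [Metric.tendsto_atTop']
    intro e he
    have he' : 0 < (e/4)^2 := by positivity
    have q1 : ∀ᶠ j in atTop, Ei - E (ψ j) < (e/4)^2 := by
      have := hEi.comp ψm.tendsto_atTop
      filter_upwards [this.eventually (lt_mem_nhds (show Ei - (e/4)^2 < Ei by linarith))] with j hj
      simp only [Function.comp] at hj
      linarith
    have q2 : ∀ᶠ j in atTop, ∫ p, |U (ψ j) p.1 p.2 - W p.1 p.2| ∂(nu.prod nu) < e/4 :=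
      LW.eventually (gt_mem_nhds (by linarith))
    obtain ⟨j, hj1, hj2⟩ := (q1.and q2).exists
    set l := ψ j
    have q3 : ∀ᶠ m in atTop, ∫ p, (f (l+1) m p.1 p.2) ^ 2 ∂(nu.prod nu)
        - ∫ p, (f l m p.1 p.2) ^ 2 ∂(nu.prod nu) < (e/4)^2 :=
      ((tE (l+1)).sub (tE l)).eventually (gt_mem_nhds (by linarith [leE (l+1)]))
    have q4 := (LU l).eventually (gt_mem_nhds (show (0:ℝ) < e/4 by linarith))
    obtain ⟨M, hM⟩ := eventually_atTop.1 (q3.and q4)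
    refine ⟨M, fun m hm => ?_⟩
    obtain ⟨a1, a2⟩ := hM m hm.le
    rw [Real.dist_eq, sub_zero, abs_of_nonneg (cutNorm_nonneg _)]
    suffices cutNorm (fun x y => g m x y - W x y) ≤ e/4 + e/4 + e/4 by linarith
    refine cutNorm_le fun S T mS mT hS hT => ?_
    have hle := restrict_le_nu hS hT
    have i1 : Integrable (fun p : ℝ × ℝ => g m p.1 p.2 - f l m p.1 p.2) (nu.prod nu) :=
      (hg m).integrable.sub (hf l m).integrable
    have i2 : Integrable (fun p : ℝ × ℝ => f l m p.1 p.2 - U l p.1 p.2) (nu.prod nu) :=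
      (hf l m).integrable.sub (hU l).integrable
    have i3 : Integrable (fun p : ℝ × ℝ => U l p.1 p.2 - W p.1 p.2) (nu.prod nu) :=
      (hU l).integrable.sub hW.integrable
    have b2 := abs_int_le (U := fun x y => f l m x y - U l x y) i2 hS hT
    have b3 := abs_int_le (U := fun x y => U l x y - W x y) i3 hS hT
    have b1 : |∫ p in S ×ˢ T, (g m p.1 p.2 - f l m p.1 p.2)| ≤ e/4 :=
      abs_le_of_sq_le_sq ((H3 l m S T hS hT).trans a1.le) (by linarith)
    have j1 := i1.mono_measure hle
    have j2 := i2.mono_measure hle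
    have j3 := i3.mono_measure hle
    have e0 : ∫ p in S ×ˢ T, (g m p.1 p.2 - W p.1 p.2) =
        (∫ p in S ×ˢ T, (g m p.1 p.2 - f l m p.1 p.2)) + (∫ p in S ×ˢ T, (f l m p.1 p.2 - U l p.1 p.2))
          + (∫ p in S ×ˢ T, (U l p.1 p.2 - W p.1 p.2)) := by
      have j12 := j1.add j2
      simp only [Pi.add_def] at j12
      rw [← integral_add j1 j2, ← integral_add j12 j3]
      congr 1; funext p; ring
    rw [e0]
    refine (abs_add_three _ _ _).trans ?_
    linarith
  · have := dct2 cen (fun j => hU (ψ j)) (fun j => hU (ψ j)) tW tW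
    exact ge_of_tendsto this (Eventually.of_forall fun j => entU _)



lemma thr (n : ℕ) [NeZero n] (c : Fin n → ℕ) (hc : Monotone c) {x : ℝ} (hx : x ∈ Set.Ioc (0:ℝ) 1)
    (a : ℕ) : c (idx n x) < a ↔
      x ≤ ((Finset.univ.filter (fun v => c v < a)).card : ℝ) / (n:ℝ) := by
  have hn : (0:ℝ) < n := by exact_mod_cast Nat.pos_of_ne_zero (NeZero.ne n)
  set k := (Finset.univ.filter (fun v => c v < a)).card with hk
  have h1 : x ≤ (k:ℝ) / n ↔ (idx n x : ℕ) < k := by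
    rw [le_div_iff₀ hn, mul_comm]
    have : ((n:ℝ) * x ≤ (k:ℝ)) ↔ ⌈(n:ℝ) * x⌉ ≤ (k:ℤ) := by
      rw [Int.ceil_le]; simp
    rw [this, idx_ceil n hx]
    omega
  rw [h1]
  constructor
  · intro h
    have hsub : Finset.Iic (idx n x) ⊆ Finset.univ.filter (fun v => c v < a) := by
      intro v hv
      simp only [Finset.mem_filter, Finset.mem_univ, true_and]
      exact (hc (Finset.mem_Iic.1 hv)).trans_lt h
    have := Finset.card_le_card hsub
    rw [Fin.card_Iic] at this
    omega
  · intro h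
    by_contra hcon
    have hsub : Finset.univ.filter (fun v => c v < a) ⊆ Finset.Iio (idx n x) := by
      intro v hv
      simp only [Finset.mem_filter, Finset.mem_univ, true_and] at hv
      rw [Finset.mem_Iio]
      by_contra h'
      exact hcon ((hc (not_lt.1 h')).trans_lt hv)
    have := Finset.card_le_card hsub
    rw [Fin.card_Iio] at this
    omega

/-- block averages -/
def blk {n : ℕ} (G : SimpleGraph (Fin n)) (c : Fin n → ℕ) (p : Fin n × Fin n) : ℝ :=
  favg (adjR G) (pcol c) (pcol c p)

lemma blk_mem {n : ℕ} (G : SimpleGraph (Fin n)) (c : Fin n → ℕ) (p : Fin n × Fin n) :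
    blk G c p ∈ Set.Icc (0:ℝ) 1 := favg_mem _ _ _ (adjR_mem G)

lemma blk_swap {n : ℕ} (G : SimpleGraph (Fin n)) (c : Fin n → ℕ) (p : Fin n × Fin n) :
    blk G c p.swap = blk G c p := favg_swap G c _ _

lemma blk_graphon (n : ℕ) [NeZero n] (G : SimpleGraph (Fin n)) (c : Fin n → ℕ) :
    IsGraphon (stepF n (blk G c)) := stepF_graphon n _ (blk_swap G c) (blk_mem G c)

lemma compact_limit (n : ℕ → ℕ) [∀ m, NeZero (n m)] (G : ∀ m, SimpleGraph (Fin (n m)))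
    (c : ∀ m, ℕ → Fin (n m) → ℕ) (N : ℕ → ℝ) (hp : ∀ m, Pack (n m) m (N m) (G m) (c m)) :
    ∃ φ : ℕ → ℕ, StrictMono φ ∧ ∀ l, ∀ᵐ p ∂(nu.prod nu), ∃ a,
      Tendsto (fun m => stepF (n (φ m)) (blk (G (φ m)) (c (φ m) l)) p.1 p.2) atTop (nhds a) := by
  let b : ℕ → ((ℕ × ℕ) ⊕ (ℕ × ℕ × ℕ)) → ℝ := fun m => Sum.elim
    (fun q => ((Finset.univ.filter (fun v => c m q.1 v < q.2)).card : ℝ) / (n m : ℝ))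
    (fun q => favg (adjR (G m)) (pcol (c m q.1)) (q.2.1, q.2.2))
  have hb : ∀ m, b m ∈ Set.univ.pi (fun _ => Set.Icc (0:ℝ) 1) := by
    intro m q _
    rcases q with q | q
    · refine ⟨by simp only [b, Sum.elim_inl]; positivity, ?_⟩
      refine div_le_one_of_le₀ ?_ (Nat.cast_nonneg _)
      have := Finset.card_filter_le (Finset.univ : Finset (Fin (n m))) (fun v => c m q.1 v < q.2)
      rw [Finset.card_univ, Fintype.card_fin] at this
      exact_mod_cast this
    · exact favg_mem _ _ _ (adjR_mem _)
  obtain ⟨β, -, φ, hφ, hlim⟩ := (isCompact_univ_pi (fun _ : ((ℕ × ℕ) ⊕ (ℕ × ℕ × ℕ)) =>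
    (isCompact_Icc : IsCompact (Set.Icc (0:ℝ) 1)))).tendsto_subseq hb
  refine ⟨φ, hφ, fun l => ?_⟩
  rw [tendsto_pi_nhds] at hlim
  have good : ∀ x ∈ Set.Ioc (0:ℝ) 1, x ∉ Set.range (fun a : ℕ => β (Sum.inl (l, a))) →
      ∃ k, ∀ᶠ m in atTop, c (φ m) l (idx (n (φ m)) x) = k := by
    intro x hx hxn
    have h1 : ∀ a : ℕ, ∀ᶠ m in atTop,
        (c (φ m) l (idx (n (φ m)) x) < a ↔ x ≤ β (Sum.inl (l, a))) := by
      intro a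
      have h2 : ∀ᶠ m in atTop, l ≤ φ m := hφ.tendsto_atTop.eventually_ge_atTop l
      have h3 := hlim (Sum.inl (l, a))
      have hne : x ≠ β (Sum.inl (l, a)) := fun h => hxn ⟨a, h.symm⟩
      rcases lt_or_gt_of_ne hne with h | h
      · filter_upwards [h2, h3.eventually (lt_mem_nhds h)] with m hm1 hm2
        rw [thr _ _ ((hp (φ m)).mono l hm1) hx]
        exact ⟨fun _ => h.le, fun _ => hm2.le⟩
      · filter_upwards [h2, h3.eventually (gt_mem_nhds h)] with m hm1 hm2
        rw [thr _ _ ((hp (φ m)).mono l hm1) hx]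
        exact ⟨fun h' => absurd h' (not_le.2 hm2), fun h' => absurd h' (not_le.2 h)⟩
    have h4 : ∀ᶠ m in atTop, ∀ a ∈ Finset.range (4 ^ l + 1),
        (c (φ m) l (idx (n (φ m)) x) < a ↔ x ≤ β (Sum.inl (l, a))) := by
      rw [Filter.eventually_all_finset]
      exact fun a _ => h1 a
    obtain ⟨m0, hm0⟩ := h4.exists
    refine ⟨c (φ m0) l (idx (n (φ m0)) x), ?_⟩
    filter_upwards [h4] with m hm
    have l1 := (hp (φ m0)).lt l (idx (n (φ m0)) x)
    have l2 := (hp (φ m)).lt l (idx (n (φ m)) x)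
    set u := c (φ m0) l (idx (n (φ m0)) x)
    set v := c (φ m) l (idx (n (φ m)) x)
    have e1 : v < u + 1 := by
      rw [hm (u+1) (by simp; omega), ← hm0 (u+1) (by simp; omega)]; omega
    have e2 : u < v + 1 := by
      rw [hm0 (v+1) (by simp; omega), ← hm (v+1) (by simp; omega)]; omega
    omega
  have hnull : ∀ᵐ x ∂nu, x ∉ Set.range (fun a : ℕ => β (Sum.inl (l, a))) :=
    ae_restrict_of_ae ((Set.countable_range _).ae_notMem _)
  have n1 : ∀ᵐ p ∂(nu.prod nu), p.1 ∉ Set.range (fun a : ℕ => β (Sum.inl (l, a))) :=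
    Measure.quasiMeasurePreserving_fst.ae hnull
  have n2 : ∀ᵐ p ∂(nu.prod nu), p.2 ∉ Set.range (fun a : ℕ => β (Sum.inl (l, a))) :=
    Measure.quasiMeasurePreserving_snd.ae hnull
  filter_upwards [n1, n2, ae_nu2_Ioc] with p a1 a2 a3
  obtain ⟨k1, hk1⟩ := good _ a3.1 a1
  obtain ⟨k2, hk2⟩ := good _ a3.2 a2
  refine ⟨β (Sum.inr (l, k1, k2)), (hlim (Sum.inr (l, k1, k2))).congr' ?_⟩
  filter_upwards [hk1, hk2] with m e1 e2
  simp only [Function.comp, b, Sum.elim_inr, stepF, blk, pcol, e1, e2]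

lemma blk_H2 (n : ℕ) [NeZero n] (G : SimpleGraph (Fin n)) (c : ℕ → Fin n → ℕ) (L : ℕ) (N : ℝ)
    (hp : Pack n L N G c) (l k : ℕ) (hlk : l ≤ k) :
    ∫ p, (stepF n (blk G (c k)) p.1 p.2 - stepF n (blk G (c l)) p.1 p.2) ^ 2 ∂(nu.prod nu)
      = ∫ p, (stepF n (blk G (c k)) p.1 p.2) ^ 2 ∂(nu.prod nu)
        - ∫ p, (stepF n (blk G (c l)) p.1 p.2) ^ 2 ∂(nu.prod nu) := by
  obtain ⟨d, rfl⟩ := Nat.exists_eq_add_of_le hlk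
  have e1 := integral_stepF n (fun p => (blk G (c (l+d)) p - blk G (c l) p) ^ 2)
  have e2 := integral_stepF n (fun p => (blk G (c (l+d)) p) ^ 2)
  have e3 := integral_stepF n (fun p => (blk G (c l) p) ^ 2)
  simp only [stepF] at e1 e2 e3 ⊢
  rw [e1, e2, e3, ← sub_div]
  congr 1
  exact favg_orth (adjR G) (pcol (c (l+d))) (pcol (c l)) (fun q => (q.1 / 4^d, q.2 / 4^d))
    (fun q => by simp only [pcol, ← hp.div])

lemma blk_H3 (n : ℕ) [NeZero n] (G : SimpleGraph (Fin n)) (c : ℕ → Fin n → ℕ) (L : ℕ) (N : ℝ)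
    (hp : Pack n L N G c) (l : ℕ) (S T : Set ℝ) (hS : S ⊆ Set.Icc 0 1) (hT : T ⊆ Set.Icc 0 1) :
    (∫ p in S ×ˢ T, (stepF n (adjR G) p.1 p.2 - stepF n (blk G (c l)) p.1 p.2)) ^ 2 ≤
      ∫ p, (stepF n (blk G (c (l+1))) p.1 p.2) ^ 2 ∂(nu.prod nu)
        - ∫ p, (stepF n (blk G (c l)) p.1 p.2) ^ 2 ∂(nu.prod nu) := by
  have hn : (0:ℝ) < n := by exact_mod_cast Nat.pos_of_ne_zero (NeZero.ne n)
  have e2 := integral_stepF n (fun p => (blk G (c (l+1)) p) ^ 2)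
  have e3 := integral_stepF n (fun p => (blk G (c l) p) ^ 2)
  have e1 := cut_stepF n (fun p => adjR G p - blk G (c l) p) _
    (fun S T => hp.cut l (S, T)) S T hS hT
  simp only [stepF] at e1 e2 e3 ⊢
  rw [e2, e3, ← sub_div]
  refine e1.trans (le_of_eq ?_)
  simp only [blk]
  field_simp

lemma blk_ent (n : ℕ) [NeZero n] (G : SimpleGraph (Fin n)) (c : ℕ → Fin n → ℕ) (L : ℕ) (N : ℝ)
    (hp : Pack n L N G c) (l : ℕ) (hl : l ≤ L) (t δ : ℝ)
    (h1 : (2:ℝ) ^ (t * choose2 n) ≤ N)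
    (h2 : ((2 * L + 2 * ((L+1) * (4^L * 4^L)) : ℕ) : ℝ) * n ≤ δ * choose2 n) :
    (t - δ) * (1 - 1 / (n:ℝ)) ≤ ∫ p, binEnt (stepF n (blk G (c l)) p.1 p.2) ∂(nu.prod nu) := by
  have hn : (0:ℝ) < n := by exact_mod_cast Nat.pos_of_ne_zero (NeZero.ne n)
  have e := integral_stepF n (fun p => binEnt (blk G (c l) p))
  simp only [stepF] at e ⊢
  rw [e]
  have h3 := hp.ent l hl
  have h4 : (Fintype.card (PData n L) : ℝ) ≤ (2:ℝ) ^ (δ * choose2 n) :=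
    (pdata_card n L).trans (Real.rpow_le_rpow_of_exponent_le (by norm_num) h2)
  have h5 : (2:ℝ) ^ (t * choose2 n) ≤ (2:ℝ) ^ (δ * choose2 n +
      ∑ p, binEnt (blk G (c l) p) / 2) := by
    rw [Real.rpow_add (by norm_num)]
    refine (h1.trans h3).trans ?_
    exact mul_le_mul_of_nonneg_right h4 (by positivity)
  rw [Real.rpow_le_rpow_left_iff (by norm_num), ← Finset.sum_div] at h5
  rw [le_div_iff₀ (by positivity)]
  have : (t - δ) * (1 - 1 / (n:ℝ)) * (n:ℝ)^2 = 2 * (t * choose2 n - δ * choose2 n) := by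
    unfold choose2; field_simp
  linarith

lemma upper (Q : GraphClass) (hQ : IsGraphClass Q) (t ε : ℝ) (hε : 0 < ε)
    (hs : ∀ W ∈ limitSet Q, graphonEnt W ≤ t) :
    ∃ N : ℕ, ∀ n ≥ N, (Nat.card ↥(Q n) : ℝ) ≤ (2 : ℝ) ^ ((t + ε) * choose2 n) := by
  by_contra hcon
  push Not at hcon
  have step : ∀ m : ℕ, ∃ k : ℕ, m ≤ k ∧
      (2 : ℝ) ^ ((t + ε) * choose2 (k+1)) < (Nat.card ↥(Q (k+1)) : ℝ) ∧
      ((2 * m + 2 * ((m+1) * (4^m * 4^m)) : ℕ) : ℝ) * (k+1 : ℕ)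
        ≤ (1 / ((m:ℝ) + 1)) * choose2 (k+1) := by
    intro m
    set C := 2 * m + 2 * ((m+1) * (4^m * 4^m)) with hC
    obtain ⟨n, hn, hn2⟩ := hcon (m + 2 * C * (m+1) + 1)
    obtain ⟨k, rfl⟩ : ∃ k, n = k + 1 := ⟨n - 1, by omega⟩
    have hk : m + 2 * C * (m+1) ≤ k := by omega
    refine ⟨k, by nlinarith [Nat.zero_le (2 * C * (m+1))], hn2, ?_⟩
    have hkr : (2:ℝ) * C * (m+1) ≤ k := by
      have : 2 * C * (m+1) ≤ k := by omega
      exact_mod_cast this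
    rw [div_mul_eq_mul_div, one_mul, le_div_iff₀ (by positivity)]
    unfold choose2
    push_cast
    have h0 : (0:ℝ) ≤ (k:ℝ) + 1 := by positivity
    nlinarith [mul_le_mul_of_nonneg_left hkr h0]
  choose k hk1 hk2 hk3 using step
  have hne : ∀ m, (Q (k m + 1)).Nonempty := by
    intro m
    by_contra h
    rw [Set.not_nonempty_iff_eq_empty] at h
    have h2 := hk2 m
    rw [h] at h2
    simp only [Nat.card_of_isEmpty, Nat.cast_zero] at h2
    exact absurd h2 (not_lt.2 (by positivity))
  have hpk := fun m => exists_pack Q hQ (k m + 1) m (hne m)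
  choose G hG c hp using hpk
  obtain ⟨φ, hφ, hlim⟩ := compact_limit (fun m => k m + 1) G c _ hp
  have hkt : Tendsto k atTop atTop := tendsto_atTop_mono hk1 tendsto_id
  have hkφ : Tendsto (fun m => k (φ m) + 1) atTop atTop :=
    (tendsto_add_atTop_nat 1).comp (hkt.comp hφ.tendsto_atTop)
  obtain ⟨W, hW, hcut, hent⟩ := analytic_limit
    (fun l m => stepF (k (φ m) + 1) (blk (G (φ m)) (c (φ m) l)))
    (fun m => stepF (k (φ m) + 1) (adjR (G (φ m))))
    (fun m => (t + ε - 1 / ((φ m : ℝ) + 1)) * (1 - 1 / ((k (φ m) + 1 : ℕ) : ℝ))) (t + ε)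
    (fun l m => blk_graphon _ _ _)
    (fun m => stepF_graphon _ _ (adjR_swap _) (adjR_mem _))
    hlim
    (fun l k' m h => blk_H2 _ _ _ _ _ (hp (φ m)) l k' h)
    (fun l m S T hS hT => blk_H3 _ _ _ _ _ (hp (φ m)) l S T hS hT)
    (by
      have a1 : Tendsto (fun m => 1 / ((φ m : ℝ) + 1)) atTop (nhds 0) :=
        tendsto_one_div_add_atTop_nhds_zero_nat.comp hφ.tendsto_atTop
      have a2 : Tendsto (fun m => 1 / ((k (φ m) + 1 : ℕ) : ℝ)) atTop (nhds 0) :=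
        tendsto_one_div_atTop_nhds_zero_nat.comp hkφ
      have := (a1.const_sub (t + ε)).mul (a2.const_sub 1)
      simpa using this)
    (fun l => by
      filter_upwards [hφ.tendsto_atTop.eventually_ge_atTop l] with m hm
      exact blk_ent _ _ _ _ _ (hp (φ m)) l hm _ _ (hk2 (φ m)).le (hk3 (φ m)))
  have hmem : W ∈ limitSet Q := by
    refine ⟨hW, fun m => k (φ m) + 1, fun m => G (φ m), fun m => hG _, hkφ, ?_⟩
    refine squeeze_zero (fun m => deltaCut_nonneg _ _) (fun m => deltaCut_le _ _) ?_
    refine hcut.congr fun m => cutNorm_congr ?_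
    filter_upwards [ae_nu2_Ioc] with p hp
    rw [graphonOfGraph_eq _ hp.1 hp.2]; rfl
  have := hs W hmem
  rw [graphonEnt_eq hW] at this
  linarith



lemma half_cut (f : ℝ → ℝ) (hf : Measurable f) (hf1 : ∀ s, f s ∈ Set.Icc (0:ℝ) 1)
    (D : ℝ × ℝ → ℝ) (hD : Measurable D) (hD1 : ∀ p, |D p| ≤ 1) :
    ∃ A : Set ℝ, MeasurableSet A ∧ ∫ p, f p.1 * D p ∂(nu.prod nu) ≤
      ∫ p, A.indicator (fun _ => (1:ℝ)) p.1 * D p ∂(nu.prod nu) := by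
  set k : ℝ → ℝ := fun s => ∫ t, D (s, t) ∂nu with hk
  have km : StronglyMeasurable k := hD.stronglyMeasurable.integral_prod_right'
  have A1 : MeasurableSet {s | 0 < k s} := measurableSet_lt measurable_const km.measurable
  have k1 : ∀ s, |k s| ≤ 1 := by
    intro s
    have := norm_integral_le_of_norm_le_const (μ := nu) (f := fun t => D (s, t)) (C := 1)
      (Eventually.of_forall fun t => hD1 _)
    simpa using this
  have gen : ∀ f : ℝ → ℝ, Measurable f → (∀ s, f s ∈ Set.Icc (0:ℝ) 1) →
      ∫ p, f p.1 * D p ∂(nu.prod nu) = ∫ s, f s * k s ∂nu ∧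
      Integrable (fun s => f s * k s) nu := by
    intro f hf hf1
    have hi : Integrable (fun p : ℝ × ℝ => f p.1 * D p) (nu.prod nu) := by
      refine Integrable.of_bound ((hf.comp measurable_fst).mul hD).aestronglyMeasurable 1
        (Eventually.of_forall fun p => ?_)
      rw [norm_mul, Real.norm_eq_abs, Real.norm_eq_abs, abs_of_nonneg (hf1 _).1]
      exact mul_le_one₀ (hf1 _).2 (abs_nonneg _) (hD1 _)
    constructor
    · rw [integral_prod _ hi]
      congr 1; funext s
      rw [hk, ← integral_const_mul]
    · refine Integrable.of_bound (hf.mul km.measurable).aestronglyMeasurable 1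
        (Eventually.of_forall fun p => ?_)
      rw [norm_mul, Real.norm_eq_abs, Real.norm_eq_abs, abs_of_nonneg (hf1 _).1]
      exact mul_le_one₀ (hf1 _).2 (abs_nonneg _) (k1 _)
  refine ⟨_, A1, ?_⟩
  have h1 : Measurable ({s | 0 < k s}.indicator (fun _ => (1:ℝ))) := measurable_const.indicator A1
  have h2 : ∀ s, {s | 0 < k s}.indicator (fun _ => (1:ℝ)) s ∈ Set.Icc (0:ℝ) 1 := by
    intro s; by_cases h : s ∈ {s | 0 < k s} <;> simp [Set.indicator, h]
  rw [(gen f hf hf1).1, (gen _ h1 h2).1]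
  refine integral_mono (gen f hf hf1).2 (gen _ h1 h2).2 fun s => ?_
  simp only
  by_cases h : 0 < k s
  · rw [Set.indicator_of_mem (by exact h)]
    nlinarith [(hf1 s).2]
  · rw [Set.indicator_of_notMem (by exact h)]
    nlinarith [(hf1 s).1]

lemma bdd_integrable {α : Type*} [MeasurableSpace α] {μ : Measure α} [IsFiniteMeasure μ]
    {f : α → ℝ} (hf : Measurable f) (h : ∀ x, |f x| ≤ 1) : Integrable f μ :=
  Integrable.of_bound hf.aestronglyMeasurable 1 (Eventually.of_forall h)

lemma weighted_cut_le (D : ℝ → ℝ → ℝ) (hD : Measurable (fun p : ℝ × ℝ => D p.1 p.2))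
    (hD1 : ∀ s t, |D s t| ≤ 1) (f g : ℝ → ℝ) (hf : Measurable f) (hg : Measurable g)
    (hf1 : ∀ s, f s ∈ Set.Icc (0:ℝ) 1) (hg1 : ∀ s, g s ∈ Set.Icc (0:ℝ) 1) :
    ∫ p, D p.1 p.2 * f p.1 * g p.2 ∂(nu.prod nu) ≤ cutNorm D := by
  obtain ⟨A, hA, h1⟩ := half_cut f hf hf1 (fun p => D p.1 p.2 * g p.2)
    (hD.mul (hg.comp measurable_snd)) (fun p => by
      rw [abs_mul, abs_of_nonneg (hg1 _).1]
      exact mul_le_one₀ (hD1 _ _) (hg1 _).1 (hg1 _).2)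
  have hind : ∀ s, A.indicator (fun _ => (1:ℝ)) s ∈ Set.Icc (0:ℝ) 1 := by
    intro s; by_cases h : s ∈ A <;> simp [Set.indicator, h]
  have mind : Measurable (A.indicator (fun _ => (1:ℝ))) := measurable_const.indicator hA
  obtain ⟨B, hB, h2⟩ := half_cut g hg hg1 (fun p => A.indicator (fun _ => (1:ℝ)) p.2 * D p.2 p.1)
    ((mind.comp measurable_snd).mul (hD.comp measurable_swap)) (fun p => by
      rw [abs_mul, abs_of_nonneg (hind _).1]
      exact mul_le_one₀ (hind _).2 (abs_nonneg _) (hD1 _ _))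
  have sw : ∀ F : ℝ × ℝ → ℝ, ∫ p, F p.swap ∂(nu.prod nu) = ∫ p, F p ∂(nu.prod nu) :=
    fun F => integral_prod_swap F
  have e1 : ∫ p, D p.1 p.2 * f p.1 * g p.2 ∂(nu.prod nu)
      = ∫ p, f p.1 * (D p.1 p.2 * g p.2) ∂(nu.prod nu) := by
    congr 1; funext p; ring
  have e2 : ∫ p, A.indicator (fun _ => (1:ℝ)) p.1 * (D p.1 p.2 * g p.2) ∂(nu.prod nu)
      = ∫ p, g p.1 * (A.indicator (fun _ => (1:ℝ)) p.2 * D p.2 p.1) ∂(nu.prod nu) := by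
    rw [← sw]
    congr 1; funext p; simp only [Prod.fst_swap, Prod.snd_swap]; ring
  have e3 : ∫ p, B.indicator (fun _ => (1:ℝ)) p.1 * (A.indicator (fun _ => (1:ℝ)) p.2 * D p.2 p.1)
      ∂(nu.prod nu) = ∫ p in (A ∩ Set.Icc 0 1) ×ˢ (B ∩ Set.Icc 0 1), D p.1 p.2 := by
    rw [← sw]
    have : ((A ∩ Set.Icc (0:ℝ) 1) ×ˢ (B ∩ Set.Icc (0:ℝ) 1)) =
      (A ×ˢ B) ∩ (Set.Icc (0:ℝ) 1 ×ˢ Set.Icc (0:ℝ) 1) := by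
        rw [Set.prod_inter_prod]
    rw [this, ← Measure.restrict_restrict (hA.prod hB), ← nu_prod_eq,
      ← integral_indicator (hA.prod hB)]
    congr 1; funext p
    by_cases h1 : p.1 ∈ A <;> by_cases h2 : p.2 ∈ B <;> simp [Set.indicator, h1, h2]
  have h3 := le_cutNorm (U := D) (bdd_integrable hD fun p => hD1 _ _)
    (hA.inter measurableSet_Icc) (hB.inter measurableSet_Icc)
    (Set.inter_subset_right (s := A)) (Set.inter_subset_right (s := B))
  rw [e1]
  refine h1.trans ?_
  rw [e2]
  refine h2.trans ?_
  rw [e3]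
  exact (le_abs_self _).trans h3

lemma cutNorm_neg (D : ℝ → ℝ → ℝ) : cutNorm (fun x y => - D x y) = cutNorm D := by
  unfold cutNorm
  congr 1; ext r
  simp only [integral_neg, abs_neg]

lemma weighted_cut (D : ℝ → ℝ → ℝ) (hD : Measurable (fun p : ℝ × ℝ => D p.1 p.2))
    (hD1 : ∀ s t, |D s t| ≤ 1) (f g : ℝ → ℝ) (hf : Measurable f) (hg : Measurable g)
    (hf1 : ∀ s, f s ∈ Set.Icc (0:ℝ) 1) (hg1 : ∀ s, g s ∈ Set.Icc (0:ℝ) 1) :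
    |∫ p, D p.1 p.2 * f p.1 * g p.2 ∂(nu.prod nu)| ≤ cutNorm D := by
  rw [abs_le]
  have h1 := weighted_cut_le D hD hD1 f g hf hg hf1 hg1
  have h2 := weighted_cut_le (fun x y => - D x y) hD.neg (by simpa using hD1) f g hf hg hf1 hg1
  rw [cutNorm_neg] at h2
  simp only [neg_mul, integral_neg] at h2
  exact ⟨by linarith, h1⟩

/-! ### Product space -/

/-- product measure -/
def mun (n : ℕ) : Measure (Fin n → ℝ) := Measure.pi (fun _ => nu)

instance mun_prob (n : ℕ) : IsProbabilityMeasure (mun n) := by unfold mun; infer_instance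

lemma mp_update (n : ℕ) (i : Fin n) :
    MeasurePreserving (fun p : (Fin n → ℝ) × ℝ => Function.update p.1 i p.2)
      ((mun n).prod nu) (mun n) := by
  have hm : Measurable (fun p : (Fin n → ℝ) × ℝ => Function.update p.1 i p.2) :=
    measurable_update'
  refine ⟨hm, ?_⟩
  symm
  refine Measure.pi_eq fun S hS => ?_
  rw [Measure.map_apply hm (MeasurableSet.univ_pi hS)]
  have : (fun p : (Fin n → ℝ) × ℝ => Function.update p.1 i p.2) ⁻¹' (Set.univ.pi S)
      = (Set.univ.pi (Function.update S i Set.univ)) ×ˢ (S i) := by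
    ext p
    simp only [Set.mem_preimage, Set.mem_univ_pi, Set.mem_prod]
    constructor
    · intro h
      refine ⟨fun j => ?_, by simpa using h i⟩
      by_cases hj : j = i
      · subst hj; simp
      · simpa [hj] using h j
    · rintro ⟨h1, h2⟩ j
      by_cases hj : j = i
      · subst hj; simpa using h2
      · simpa [hj] using h1 j
  rw [this, Measure.prod_prod, mun, Measure.pi_pi]
  rw [← Finset.prod_erase_mul _ _ (Finset.mem_univ i),
    ← Finset.prod_erase_mul Finset.univ (fun j => nu (S j)) (Finset.mem_univ i)]
  simp only [Function.update_self, measure_univ, mul_one]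
  congr 1
  refine Finset.prod_congr rfl fun j hj => ?_
  rw [Function.update_of_ne (Finset.ne_of_mem_erase hj)]

/-- resample two coordinates -/
def upd2 {n : ℕ} (i j : Fin n) (q : (Fin n → ℝ) × (ℝ × ℝ)) : Fin n → ℝ :=
  Function.update (Function.update q.1 i q.2.1) j q.2.2

lemma mp_update2 (n : ℕ) (i j : Fin n) :
    MeasurePreserving (upd2 i j) ((mun n).prod (nu.prod nu)) (mun n) := by
  have h1 := (measurePreserving_prodAssoc (mun n) nu nu).symm
  have h2 := (mp_update n i).prod (MeasurePreserving.id nu)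
  exact (mp_update n j).comp (h2.comp h1)

lemma integral_upd2 {n : ℕ} (i j : Fin n) (H : (Fin n → ℝ) → ℝ) (hH : Measurable H) :
    ∫ x, H x ∂(mun n) = ∫ q, H (upd2 i j q) ∂((mun n).prod (nu.prod nu)) := by
  have h := mp_update2 n i j
  have h2 := integral_map (μ := (mun n).prod (nu.prod nu)) h.measurable.aemeasurable (f := H)
    hH.aestronglyMeasurable
  rw [h.map_eq] at h2
  exact h2

lemma integral_coord_pair {n : ℕ} (i j : Fin n) (hij : i ≠ j) (H : ℝ × ℝ → ℝ) (hH : Measurable H) :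
    ∫ x, H (x i, x j) ∂(mun n) = ∫ p, H p ∂(nu.prod nu) := by
  have hm : Measurable (fun x : Fin n → ℝ => H (x i, x j)) :=
    hH.comp ((measurable_pi_apply i).prodMk (measurable_pi_apply j))
  rw [integral_upd2 i j _ hm]
  have : ∀ q : (Fin n → ℝ) × (ℝ × ℝ), H (upd2 i j q i, upd2 i j q j) = H q.2 := by
    intro q; simp [upd2, Function.update_of_ne hij]
  simp only [this]
  rw [integral_fun_snd]
  simp

lemma one_step {n : ℕ} (i j : Fin n) (hij : i ≠ j) (D : ℝ → ℝ → ℝ)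
    (hD : Measurable (fun p : ℝ × ℝ => D p.1 p.2)) (hD1 : ∀ s t, |D s t| ≤ 1)
    (F G : (Fin n → ℝ) → ℝ) (hF : Measurable F) (hG : Measurable G)
    (hF1 : ∀ x, F x ∈ Set.Icc (0:ℝ) 1) (hG1 : ∀ x, G x ∈ Set.Icc (0:ℝ) 1)
    (iF : ∀ x s, F (Function.update x j s) = F x)
    (iG : ∀ x s, G (Function.update x i s) = G x) :
    |∫ x, D (x i) (x j) * F x * G x ∂(mun n)| ≤ cutNorm D := by
  have hm : Measurable (fun x : Fin n → ℝ => D (x i) (x j) * F x * G x) :=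
by
    have hpm : Measurable (fun x : Fin n → ℝ => (x i, x j)) :=
      (measurable_pi_apply i).prodMk (measurable_pi_apply j)
    exact ((hD.comp hpm).mul hF).mul hG
  have hb : ∀ x : Fin n → ℝ, |D (x i) (x j) * F x * G x| ≤ 1 := by
    intro x
    rw [abs_mul, abs_mul, abs_of_nonneg (hF1 x).1, abs_of_nonneg (hG1 x).1]
    exact mul_le_one₀ (mul_le_one₀ (hD1 _ _) (hF1 x).1 (hF1 x).2) (hG1 x).1 (hG1 x).2
  have hIntg : Integrable (fun q : (Fin n → ℝ) × (ℝ × ℝ) =>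
      D (upd2 i j q i) (upd2 i j q j) * F (upd2 i j q) * G (upd2 i j q))
      ((mun n).prod (nu.prod nu)) :=
    bdd_integrable (hm.comp (mp_update2 n i j).measurable) fun q => hb _
  rw [integral_upd2 i j _ hm, integral_prod _ hIntg]
  have key : ∀ x : Fin n → ℝ, ‖∫ p : ℝ × ℝ, D (upd2 i j (x, p) i) (upd2 i j (x, p) j)
      * F (upd2 i j (x, p)) * G (upd2 i j (x, p)) ∂(nu.prod nu)‖ ≤ cutNorm D := by
    intro x
    have e : ∀ p : ℝ × ℝ, D (upd2 i j (x, p) i) (upd2 i j (x, p) j)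
      * F (upd2 i j (x, p)) * G (upd2 i j (x, p)) =
        D p.1 p.2 * F (Function.update x i p.1) * G (Function.update x j p.2) := by
      intro p
      have h1 : F (upd2 i j (x, p)) = F (Function.update x i p.1) := by
        simp only [upd2]; rw [iF]
      have h2 : G (upd2 i j (x, p)) = G (Function.update x j p.2) := by
        simp only [upd2]; rw [Function.update_comm hij, iG]
      rw [h1, h2]
      simp [upd2, Function.update_of_ne hij]
    simp only [e]
    exact weighted_cut D hD hD1 (fun s => F (Function.update x i s))
      (fun s => G (Function.update x j s)) (hF.comp (measurable_update x))
      (hG.comp (measurable_update x)) (fun s => hF1 _) (fun s => hG1 _)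
  have := norm_integral_le_of_norm_le_const (μ := mun n) (Eventually.of_forall key)
  simpa using this



/-- ordered pairs -/
def prs (n : ℕ) : Finset (Fin n × Fin n) := Finset.univ.filter (fun e => e.1 < e.2)

lemma mem_prs {n : ℕ} {e : Fin n × Fin n} : e ∈ prs n ↔ e.1 < e.2 := by simp [prs]

lemma prs_card (n : ℕ) : ((prs n).card : ℝ) = choose2 n := by
  classical
  have h1 : (prs n).card + (prs n).card = (Finset.univ : Finset (Fin n)).offDiag.card := by
    have h2 : ((prs n).image Prod.swap).card = (prs n).card :=
      Finset.card_image_of_injective _ Prod.swap_injective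
    have h3 : Disjoint (prs n) ((prs n).image Prod.swap) := by
      rw [Finset.disjoint_left]
      intro e he he'
      obtain ⟨e', h, rfl⟩ := Finset.mem_image.1 he'
      rw [mem_prs] at h he
      exact absurd he (not_lt.2 h.le)
    have h4 : (Finset.univ : Finset (Fin n)).offDiag = prs n ∪ (prs n).image Prod.swap := by
      ext e
      simp only [Finset.mem_offDiag, Finset.mem_univ, true_and, Finset.mem_union, mem_prs,
        Finset.mem_image]
      constructor
      · intro h
        rcases lt_or_gt_of_ne h with h | h
        · exact Or.inl h
        · exact Or.inr ⟨e.swap, h, by simp⟩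
      · rintro (h | ⟨e', h, rfl⟩)
        · exact h.ne
        · exact h.ne'
    rw [h4, Finset.card_union_of_disjoint h3, h2]
  rw [Finset.offDiag_card, Finset.card_univ, Fintype.card_fin] at h1
  have h5 : (prs n).card + (prs n).card + n = n * n := by
    have : n ≤ n * n := Nat.le_mul_self n
    omega
  have h6 : ((prs n).card : ℝ) + (prs n).card + n = n * n := by exact_mod_cast h5
  unfold choose2
  linarith

open Classical in
/-- edge factor -/
def fac {n : ℕ} (F : SimpleGraph (Fin n)) (e : Fin n × Fin n) (U : ℝ → ℝ → ℝ) (s t : ℝ) : ℝ :=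
  if F.Adj e.1 e.2 then U s t else 1 - U s t

lemma fac_mem {n : ℕ} (F : SimpleGraph (Fin n)) (e : Fin n × Fin n) {U : ℝ → ℝ → ℝ}
    (hU : IsGraphon U) (s t : ℝ) : fac F e U s t ∈ Set.Icc (0:ℝ) 1 := by
  have := hU.2.2 s t
  unfold fac
  split_ifs
  · exact this
  · constructor <;> linarith [this.1, this.2]

lemma fac_meas {n : ℕ} (F : SimpleGraph (Fin n)) (e : Fin n × Fin n) {U : ℝ → ℝ → ℝ}
    (hU : IsGraphon U) (i j : Fin n) :
    Measurable (fun x : Fin n → ℝ => fac F e U (x i) (x j)) := by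
  have hpm : Measurable (fun x : Fin n → ℝ => (x i, x j)) :=
    (measurable_pi_apply i).prodMk (measurable_pi_apply j)
  have h := hU.meas.comp hpm
  unfold fac
  split_ifs
  · exact h
  · exact measurable_const.sub h

lemma prod_mem01 {α : Type*} (s : Finset α) (f : α → ℝ) (h : ∀ a ∈ s, f a ∈ Set.Icc (0:ℝ) 1) :
    ∏ a ∈ s, f a ∈ Set.Icc (0:ℝ) 1 :=
  ⟨Finset.prod_nonneg fun a ha => (h a ha).1,
    Finset.prod_le_one (fun a ha => (h a ha).1) fun a ha => (h a ha).2⟩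

/-- integrand -/
def dint {n : ℕ} (F : SimpleGraph (Fin n)) (U : ℝ → ℝ → ℝ) (x : Fin n → ℝ) : ℝ :=
  ∏ e ∈ prs n, fac F e U (x e.1) (x e.2)

lemma dint_mem {n : ℕ} (F : SimpleGraph (Fin n)) {U : ℝ → ℝ → ℝ} (hU : IsGraphon U)
    (x : Fin n → ℝ) : dint F U x ∈ Set.Icc (0:ℝ) 1 :=
  prod_mem01 _ _ fun e _ => fac_mem F e hU _ _

lemma dint_meas {n : ℕ} (F : SimpleGraph (Fin n)) {U : ℝ → ℝ → ℝ} (hU : IsGraphon U) :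
    Measurable (dint F U) :=
  Finset.measurable_prod _ fun e _ => fac_meas F e hU _ _

lemma abs_le_of_mem01 {a : ℝ} (h : a ∈ Set.Icc (0:ℝ) 1) : |a| ≤ 1 := by
  rw [abs_of_nonneg h.1]; exact h.2

/-- density -/
def dens {n : ℕ} (F : SimpleGraph (Fin n)) (U : ℝ → ℝ → ℝ) : ℝ := ∫ x, dint F U x ∂(mun n)

lemma counting {n : ℕ} (F : SimpleGraph (Fin n)) {U V : ℝ → ℝ → ℝ} (hU : IsGraphon U)
    (hV : IsGraphon V) :
    |dens F U - dens F V| ≤ ((prs n).card : ℝ) * cutNorm (fun x y => U x y - V x y) := by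
  classical
  set D : ℝ → ℝ → ℝ := fun x y => U x y - V x y with hDdef
  have hD : Measurable (fun p : ℝ × ℝ => D p.1 p.2) := hU.meas.sub hV.meas
  have hD1 : ∀ s t, |D s t| ≤ 1 := by
    intro s t
    have h1 := hU.2.2 s t
    have h2 := hV.2.2 s t
    rw [abs_le]; constructor <;> simp only [hDdef] <;> linarith [h1.1, h1.2, h2.1, h2.2]
  let W : Finset (Fin n × Fin n) → Fin n × Fin n → ℝ → ℝ → ℝ := fun s e => if e ∈ s then U else V
  have hW : ∀ s e, IsGraphon (W s e) := by
    intro s e; simp only [W]; split_ifs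
    · exact hU
    · exact hV
  let H : Finset (Fin n × Fin n) → (Fin n → ℝ) → ℝ := fun s x =>
    ∏ e ∈ prs n, fac F e (W s e) (x e.1) (x e.2)
  have Hmem : ∀ s x, H s x ∈ Set.Icc (0:ℝ) 1 := fun s x =>
    prod_mem01 _ _ fun e _ => fac_mem F e (hW s e) _ _
  have Hmeas : ∀ s, Measurable (H s) := fun s =>
    Finset.measurable_prod _ fun e _ => fac_meas F e (hW s e) _ _
  have Hint : ∀ s, Integrable (H s) (mun n) := fun s =>
    bdd_integrable (Hmeas s) fun x => abs_le_of_mem01 (Hmem s x)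
  have step : ∀ s e0, e0 ∈ prs n → e0 ∉ s →
      |∫ x, H (insert e0 s) x ∂(mun n) - ∫ x, H s x ∂(mun n)| ≤ cutNorm D := by
    intro s e0 he0 hs
    obtain ⟨i, j⟩ := e0
    have hij : i < j := mem_prs.1 he0
    let T := (prs n).erase (i, j)
    let P : Fin n × Fin n → Prop := fun e => e.1 = i ∨ e.2 = i
    let A : (Fin n → ℝ) → ℝ := fun x => ∏ e ∈ T.filter P, fac F e (W s e) (x e.1) (x e.2)
    let B : (Fin n → ℝ) → ℝ := fun x => ∏ e ∈ T.filter (fun e => ¬ P e), fac F e (W s e) (x e.1) (x e.2)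
    have hA1 : ∀ x, A x ∈ Set.Icc (0:ℝ) 1 := fun x => prod_mem01 _ _ fun e _ => fac_mem F e (hW s e) _ _
    have hB1 : ∀ x, B x ∈ Set.Icc (0:ℝ) 1 := fun x => prod_mem01 _ _ fun e _ => fac_mem F e (hW s e) _ _
    have hAm : Measurable A := Finset.measurable_prod _ fun e _ => fac_meas F e (hW s e) _ _
    have hBm : Measurable B := Finset.measurable_prod _ fun e _ => fac_meas F e (hW s e) _ _
    have iA : ∀ x t, A (Function.update x j t) = A x := by
      intro x t
      refine Finset.prod_congr rfl fun e he => ?_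
      simp only [T, P, Finset.mem_filter, Finset.mem_erase, mem_prs] at he
      obtain ⟨⟨h1, h2⟩, h3⟩ := he
      have n1 : e.1 ≠ j := by
        rintro h
        rcases h3 with h3 | h3
        · exact hij.ne (h3.symm.trans h)
        · rw [h, h3] at h2; exact absurd h2 (not_lt.2 hij.le)
      have n2 : e.2 ≠ j := by
        rintro h
        rcases h3 with h3 | h3
        · exact h1 (Prod.ext h3 h)
        · exact hij.ne (h3.symm.trans h)
      rw [Function.update_of_ne n1, Function.update_of_ne n2]
    have iB : ∀ x t, B (Function.update x i t) = B x := by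
      intro x t
      refine Finset.prod_congr rfl fun e he => ?_
      simp only [P, Finset.mem_filter, not_or] at he
      rw [Function.update_of_ne he.2.1, Function.update_of_ne he.2.2]
    have split : ∀ x, H s x = fac F (i, j) V (x i) (x j) * (A x * B x) := by
      intro x
      simp only [H, A, B]
      rw [Finset.prod_filter_mul_prod_filter_not, ← Finset.mul_prod_erase _ _ he0]
      simp only [W, if_neg hs]
      rfl
    have split2 : ∀ x, H (insert (i, j) s) x = fac F (i, j) U (x i) (x j) * (A x * B x) := by
      intro x
      simp only [H, A, B]
      rw [Finset.prod_filter_mul_prod_filter_not, ← Finset.mul_prod_erase _ _ he0]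
      simp only [W, Finset.mem_insert_self, if_true]
      congr 1
      refine Finset.prod_congr rfl fun e he => ?_
      have : e ≠ (i, j) := Finset.ne_of_mem_erase he
      simp only [Finset.mem_insert, this, false_or]
    have main := one_step i j hij.ne D hD hD1 A B hAm hBm hA1 hB1 iA iB
    rw [← integral_sub (Hint _) (Hint _)]
    by_cases hadj : F.Adj i j
    · have e : ∀ x, H (insert (i, j) s) x - H s x = D (x i) (x j) * A x * B x := by
        intro x
        rw [split, split2]
        simp only [fac, hadj, if_true, hDdef]; ring
      simp only [e]; exact main
    · have e : ∀ x, H (insert (i, j) s) x - H s x = - (D (x i) (x j) * A x * B x) := by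
        intro x
        rw [split, split2]
        simp only [fac, hadj, if_false, hDdef]; ring
      simp only [e, integral_neg, abs_neg]; exact main
  have ind : ∀ s : Finset (Fin n × Fin n), s ⊆ prs n →
      |∫ x, H s x ∂(mun n) - ∫ x, H ∅ x ∂(mun n)| ≤ (s.card : ℝ) * cutNorm D := by
    intro s
    induction s using Finset.induction_on with
    | empty => intro _; simp
    | insert e s hes ih =>
      intro hsub
      have h1 := ih ((Finset.subset_insert _ _).trans hsub)
      have h2 := step s e (hsub (Finset.mem_insert_self _ _)) hes
      rw [Finset.card_insert_of_notMem hes]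
      push_cast
      have h3 := abs_sub_le (∫ x, H (insert e s) x ∂(mun n)) (∫ x, H s x ∂(mun n))
        (∫ x, H ∅ x ∂(mun n))
      linarith
  have fin := ind (prs n) subset_rfl
  have e1 : ∀ x, H (prs n) x = dint F U x := by
    intro x
    refine Finset.prod_congr rfl fun e he => ?_
    simp only [W, if_pos he]
  have e2 : ∀ x, H ∅ x = dint F V x := by
    intro x
    refine Finset.prod_congr rfl fun e he => ?_
    simp [W]
  simp only [e1, e2] at fin
  exact fin

lemma comp_graphon {U : ℝ → ℝ → ℝ} (hU : IsGraphon U) {σ : ℝ → ℝ} (hσ : IsMPSelf σ) :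
    IsGraphon (fun x y => U (σ x) (σ y)) := by
  refine ⟨fun x y => hU.1 _ _, ?_, fun x y => hU.2.2 _ _⟩
  exact hU.meas.comp ((hσ.1.measurable.comp measurable_fst).prodMk
    (hσ.1.measurable.comp measurable_snd))

lemma dens_comp {n : ℕ} (F : SimpleGraph (Fin n)) {U : ℝ → ℝ → ℝ} (hU : IsGraphon U) {σ : ℝ → ℝ}
    (hσ : IsMPSelf σ) : dens F (fun x y => U (σ x) (σ y)) = dens F U := by
  have hp : MeasurePreserving (fun x : Fin n → ℝ => fun i => σ (x i)) (mun n) (mun n) :=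
    measurePreserving_pi (fun _ => nu) (fun _ => nu) (fun _ => hσ.1)
  have h2 := integral_map (μ := mun n) hp.measurable.aemeasurable (f := dint F U)
    (dint_meas F hU).aestronglyMeasurable
  rw [hp.map_eq] at h2
  exact h2.symm

lemma counting_delta {n : ℕ} (F : SimpleGraph (Fin n)) {U V : ℝ → ℝ → ℝ} (hU : IsGraphon U)
    (hV : IsGraphon V) :
    |dens F U - dens F V| ≤ (((prs n).card : ℝ) + 1) * deltaCut U V := by
  have hc : (0:ℝ) < ((prs n).card : ℝ) + 1 := by positivity
  rw [← div_le_iff₀' hc]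
  apply le_csInf
  · exact ⟨_, _, _, isMPSelf_id, isMPSelf_id, rfl⟩
  · rintro r ⟨σ₁, σ₂, h1, h2, rfl⟩
    rw [div_le_iff₀' hc, ← dens_comp F hU h1, ← dens_comp F hV h2]
    have := counting F (comp_graphon hU h1) (comp_graphon hV h2)
    have h0 := cutNorm_nonneg (fun x y => U (σ₁ x) (σ₁ y) - V (σ₂ x) (σ₂ y))
    nlinarith

lemma graphonOfGraph_graphon {N : ℕ} (G : SimpleGraph (Fin N)) : IsGraphon (graphonOfGraph G) := by
  classical
  refine ⟨fun x y => ?_, ?_, fun x y => ?_⟩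
  · unfold graphonOfGraph
    congr 1
    apply propext
    constructor
    · rintro ⟨i, j, h, a, b⟩; exact ⟨j, i, h.symm, b, a⟩
    · rintro ⟨i, j, h, a, b⟩; exact ⟨j, i, h.symm, b, a⟩
  · have h : Measurable (fun k : ℤ × ℤ => if ∃ i j : Fin N, G.Adj i j ∧ k.1 = ((i : ℕ) : ℤ) + 1 ∧
      k.2 = ((j : ℕ) : ℤ) + 1 then (1:ℝ) else 0) := Measurable.of_discrete
    have h2 : Measurable (fun p : ℝ × ℝ => (⌈(N:ℝ) * p.1⌉, ⌈(N:ℝ) * p.2⌉)) :=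
      (Int.measurable_ceil.comp (measurable_fst.const_mul _)).prodMk
        (Int.measurable_ceil.comp (measurable_snd.const_mul _))
    have h3 := h.comp h2
    have e : Function.uncurry (graphonOfGraph G) = (fun k : ℤ × ℤ => if ∃ i j : Fin N, G.Adj i j ∧
        k.1 = ((i : ℕ) : ℤ) + 1 ∧ k.2 = ((j : ℕ) : ℤ) + 1 then (1:ℝ) else 0) ∘
        (fun p : ℝ × ℝ => (⌈(N:ℝ) * p.1⌉, ⌈(N:ℝ) * p.2⌉)) := by
      funext p
      simp only [Function.uncurry, graphonOfGraph, Function.comp]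
    rw [e]; exact h3
  · unfold graphonOfGraph; split_ifs <;> simp



lemma hered_inj {Q : GraphClass} (hQ : IsHereditary Q) {n N : ℕ} (v : Fin n → Fin N)
    (hv : Function.Injective v) (G : SimpleGraph (Fin N)) (hG : G ∈ Q N) : G.comap v ∈ Q n := by
  set π := Tuple.sort v
  have h1 : StrictMono (v ∘ π) :=
    (Tuple.monotone_sort v).strictMono_of_injective (hv.comp π.injective)
  have h2 := hQ.2 n N _ h1 G hG
  have h3 := hQ.1 n π.symm _ h2
  convert h3 using 1
  ext a b
  simp [SimpleGraph.comap_adj]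

lemma coll {n N : ℕ} [NeZero N] (i j : Fin n) (hij : i ≠ j) :
    ∫ x, (if idx N (x i) = idx N (x j) then (1:ℝ) else 0) ∂(mun n) = 1 / N := by
  have hN : (0:ℝ) < N := by exact_mod_cast Nat.pos_of_ne_zero (NeZero.ne N)
  have hm : Measurable (fun k : Fin N × Fin N => if k.1 = k.2 then (1:ℝ) else 0) :=
    Measurable.of_discrete
  have hm2 : Measurable (fun p : ℝ × ℝ => if idx N p.1 = idx N p.2 then (1:ℝ) else 0) :=
    hm.comp (((measurable_idx N).comp measurable_fst).prodMk
      ((measurable_idx N).comp measurable_snd))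
  rw [integral_coord_pair i j hij (fun p => if idx N p.1 = idx N p.2 then (1:ℝ) else 0) hm2]
  have := integral_stepF N (fun k : Fin N × Fin N => if k.1 = k.2 then (1:ℝ) else 0)
  simp only [stepF] at this
  rw [this, Fintype.sum_prod_type]
  simp
  field_simp

lemma ae_mun_Ioc (n : ℕ) : ∀ᵐ x ∂(mun n), ∀ i, x i ∈ Set.Ioc (0:ℝ) 1 := by
  rw [ae_all_iff]
  intro i
  exact (Measure.quasiMeasurePreserving_eval (μ := fun _ : Fin n => nu) i).ae ae_nu_Ioc

lemma dens_graph {Q : GraphClass} (hQ : IsHereditary Q) {n N : ℕ} [NeZero N]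
    (G : SimpleGraph (Fin N)) (hG : G ∈ Q N) (F : SimpleGraph (Fin n)) (hF : F ∉ Q n) :
    dens F (graphonOfGraph G) ≤ ((prs n).card : ℝ) * (1 / N) := by
  have hIntg : ∀ e ∈ prs n, Integrable
      (fun x : Fin n → ℝ => if idx N (x e.1) = idx N (x e.2) then (1:ℝ) else 0) (mun n) := by
    intro e _
    have hm : Measurable (fun k : Fin N × Fin N => if k.1 = k.2 then (1:ℝ) else 0) :=
      Measurable.of_discrete
    have hm2 : Measurable (fun x : Fin n → ℝ => (idx N (x e.1), idx N (x e.2))) :=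
      ((measurable_idx N).comp (measurable_pi_apply _)).prodMk
        ((measurable_idx N).comp (measurable_pi_apply _))
    refine bdd_integrable (hm.comp hm2) fun x => ?_
    split_ifs <;> simp
  have hW := graphonOfGraph_graphon G
  have e : ((prs n).card : ℝ) * (1 / N) =
      ∫ x, ∑ e ∈ prs n, (if idx N (x e.1) = idx N (x e.2) then (1:ℝ) else 0) ∂(mun n) := by
    rw [integral_finset_sum _ hIntg, Finset.sum_congr rfl fun e he => coll e.1 e.2 (mem_prs.1 he).ne]
    simp
  rw [e]
  refine integral_mono_ae (bdd_integrable (dint_meas F hW) fun x => abs_le_of_mem01 (dint_mem F hW x))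
    (integrable_finset_sum _ hIntg) ?_
  filter_upwards [ae_mun_Ioc n] with x hx
  have nonneg : ∀ e ∈ prs n, (0:ℝ) ≤ if idx N (x e.1) = idx N (x e.2) then (1:ℝ) else 0 := by
    intro e _; split_ifs <;> simp
  by_cases hinj : Function.Injective (fun i => idx N (x i))
  · have hz : dint F (graphonOfGraph G) x = 0 := by
      by_contra hne
      apply hF
      have : F = G.comap (fun i => idx N (x i)) := by
        have key : ∀ a b : Fin n, a < b → (F.Adj a b ↔ G.Adj (idx N (x a)) (idx N (x b))) := by
          intro a b hab
          have h1 := Finset.prod_ne_zero_iff.1 hne (a, b) (mem_prs.2 hab)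
          simp only [fac, graphonOfGraph_eq G (hx a) (hx b), adjR] at h1
          by_cases h2 : F.Adj a b <;> by_cases h3 : G.Adj (idx N (x a)) (idx N (x b)) <;>
            simp [h2, h3] at h1 ⊢
        ext a b
        rw [SimpleGraph.comap_adj]
        rcases lt_trichotomy a b with h | h | h
        · exact key a b h
        · subst h; simp
        · rw [F.adj_comm, G.adj_comm]; exact key b a h
      rw [this]
      exact hered_inj hQ _ hinj G hG
    rw [hz]
    exact Finset.sum_nonneg nonneg
  · simp only [Function.Injective, not_forall] at hinj
    obtain ⟨a, b, hab, hne⟩ := hinj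
    refine (dint_mem F hW x).2.trans ?_
    rcases lt_or_gt_of_ne hne with h | h
    · have := Finset.single_le_sum nonneg (mem_prs.2 h : (a, b) ∈ prs n)
      simpa [hab] using this
    · have := Finset.single_le_sum nonneg (mem_prs.2 h : (b, a) ∈ prs n)
      simpa [hab] using this

lemma dens_limit {Q : GraphClass} (hQ : IsHereditary Q) {n : ℕ} {W : ℝ → ℝ → ℝ}
    (hW : W ∈ limitSet Q) (F : SimpleGraph (Fin n)) (hF : F ∉ Q n) : dens F W ≤ 0 := by
  obtain ⟨hg, nk, Gk, hG, hn, hd⟩ := hW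
  have h1 : Tendsto (fun k => ((prs n).card : ℝ) * (1 / (nk k : ℝ)) +
      (((prs n).card : ℝ) + 1) * deltaCut (graphonOfGraph (Gk k)) W) atTop (nhds 0) := by
    have a := (tendsto_one_div_atTop_nhds_zero_nat (𝕜 := ℝ)).comp hn
    have := (a.const_mul ((prs n).card : ℝ)).add (hd.const_mul (((prs n).card : ℝ) + 1))
    simpa using this
  refine ge_of_tendsto h1 ?_
  filter_upwards [hn.eventually_ge_atTop 1] with k hk
  haveI : NeZero (nk k) := ⟨by omega⟩
  have b1 := dens_graph hQ (Gk k) (hG k) F hF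
  have b2 := abs_le.1 (counting_delta F (graphonOfGraph_graphon (Gk k)) hg)
  linarith [b2.1]

lemma binEnt_zero' : binEnt 0 = 0 := by simp [binEnt]
lemma binEnt_one' : binEnt 1 = 0 := by simp [binEnt]

lemma pointwise {Q : GraphClass} {n : ℕ} {W : ℝ → ℝ → ℝ} (hW : IsGraphon W) (x : Fin n → ℝ)
    (hx : ∀ F : SimpleGraph (Fin n), F ∉ Q n → dint F W x = 0) :
    (2:ℝ) ^ (∑ e ∈ prs n, binEnt (W (x e.1) (x e.2))) ≤ (Nat.card ↥(Q n) : ℝ) := by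
  classical
  let w : Fin n × Fin n → ℝ := fun e => W (x e.1) (x e.2)
  let R := (prs n).filter (fun e => 0 < w e ∧ w e < 1)
  let O := (prs n).filter (fun e => w e = 1)
  have hw : ∀ e, w e ∈ Set.Icc (0:ℝ) 1 := fun e => hW.2.2 _ _
  have h1 : ∑ e ∈ prs n, binEnt (w e) ≤ (R.card : ℝ) := by
    have : (R.card : ℝ) = ∑ e ∈ prs n, if 0 < w e ∧ w e < 1 then (1:ℝ) else 0 := by
      simp [R]
    rw [this]
    refine Finset.sum_le_sum fun e _ => ?_
    split_ifs with h
    · exact binEnt_le_one _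
    · have : w e = 0 ∨ w e = 1 := by
        rcases (hw e).1.eq_or_lt with h' | h'
        · exact Or.inl h'.symm
        · exact Or.inr (le_antisymm (hw e).2 (not_lt.1 fun h'' => h ⟨h', h''⟩))
      rcases this with h | h <;> rw [h]
      · rw [binEnt_zero']
      · rw [binEnt_one']
  let FF : Finset (Fin n × Fin n) → SimpleGraph (Fin n) := fun S =>
    SimpleGraph.fromRel (fun i j => (i, j) ∈ S ∪ O)
  have adj : ∀ S, S ⊆ R → ∀ e ∈ prs n, ((FF S).Adj e.1 e.2 ↔ e ∈ S ∪ O) := by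
    intro S hS e he
    have hlt := mem_prs.1 he
    have hsub : S ∪ O ⊆ prs n := Finset.union_subset (hS.trans (Finset.filter_subset _ _))
      (Finset.filter_subset _ _)
    simp only [FF, SimpleGraph.fromRel_adj]
    constructor
    · rintro ⟨-, h | h⟩
      · exact h
      · exact absurd (mem_prs.1 (hsub h)) (not_lt.2 hlt.le)
    · exact fun h => ⟨hlt.ne, Or.inl h⟩
  have memQ : ∀ S, S ⊆ R → FF S ∈ Q n := by
    intro S hS
    by_contra hcon
    have h0 := hx _ hcon
    refine absurd h0 (Finset.prod_ne_zero_iff.2 fun e he => ?_)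
    by_cases h : e ∈ S ∪ O
    · rw [fac, if_pos ((adj S hS e he).2 h)]
      rcases Finset.mem_union.1 h with h | h
      · exact (Finset.mem_filter.1 (hS h)).2.1.ne'
      · have : w e = 1 := (Finset.mem_filter.1 h).2
        change w e ≠ 0
        rw [this]; norm_num
    · rw [fac, if_neg (fun h' => h ((adj S hS e he).1 h'))]
      have hne : w e ≠ 1 := fun h' => h (Finset.mem_union_right _ (Finset.mem_filter.2 ⟨he, h'⟩))
      change 1 - w e ≠ 0
      intro h'; apply hne; linarith
  have inj : ∀ S, S ⊆ R → ∀ S', S' ⊆ R → FF S = FF S' → S ⊆ S' := by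
    intro S hS S' hS' heq e he
    have heR := Finset.mem_filter.1 (hS he)
    have h2 := (adj S hS e heR.1).2 (Finset.mem_union_left _ he)
    rw [heq, adj S' hS' e heR.1] at h2
    rcases Finset.mem_union.1 h2 with h | h
    · exact h
    · exact absurd (Finset.mem_filter.1 h).2 heR.2.2.ne
  have hcard : 2 ^ R.card ≤ Nat.card ↥(Q n) := by
    rw [← Finset.card_powerset, ← Nat.card_eq_finsetCard R.powerset]
    exact Nat.card_le_card_of_injective
      (fun S : R.powerset => (⟨FF S, memQ S (Finset.mem_powerset.1 S.2)⟩ : Q n)) (by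
        intro S S' h
        have h' : FF S = FF S' := congrArg Subtype.val h
        have s1 := Finset.mem_powerset.1 S.2
        have s2 := Finset.mem_powerset.1 S'.2
        exact Subtype.ext (Finset.Subset.antisymm (inj _ s1 _ s2 h') (inj _ s2 _ s1 h'.symm)))
  calc (2:ℝ) ^ (∑ e ∈ prs n, binEnt (w e)) ≤ (2:ℝ) ^ (R.card : ℝ) :=
        Real.rpow_le_rpow_of_exponent_le (by norm_num) h1
    _ = ((2 ^ R.card : ℕ) : ℝ) := by rw [Real.rpow_natCast]; push_cast; rfl
    _ ≤ _ := by exact_mod_cast hcard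

lemma lower {Q : GraphClass} (hQ : IsHereditary Q) (n : ℕ) {W : ℝ → ℝ → ℝ}
    (hW : W ∈ limitSet Q) :
    (2:ℝ) ^ (graphonEnt W * choose2 n) ≤ (Nat.card ↥(Q n) : ℝ) := by
  have hg := hW.1
  have h1 : ∀ᵐ x ∂(mun n), ∀ F : SimpleGraph (Fin n), F ∉ Q n → dint F W x = 0 := by
    rw [ae_all_iff]
    intro F
    by_cases hF : F ∈ Q n
    · exact Eventually.of_forall fun x h => absurd hF h
    · have h2 := dens_limit hQ hW F hF
      have h3 : 0 ≤ dens F W := integral_nonneg fun x => (dint_mem F hg x).1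
      have h4 := (integral_eq_zero_iff_of_nonneg (μ := mun n) (f := dint F W)
        (fun x => (dint_mem F hg x).1)
        (bdd_integrable (dint_meas F hg) fun x => abs_le_of_mem01 (dint_mem F hg x))).1
        (le_antisymm h2 h3)
      filter_upwards [h4] with x hx _ using hx
  have h2 : ∀ᵐ x ∂(mun n), (2:ℝ) ^ (∑ e ∈ prs n, binEnt (W (x e.1) (x e.2)))
      ≤ (Nat.card ↥(Q n) : ℝ) := by
    filter_upwards [h1] with x hx using pointwise hg x hx
  have hpos : (0:ℝ) < (Nat.card ↥(Q n) : ℝ) := by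
    obtain ⟨x, hx⟩ := h2.exists
    exact lt_of_lt_of_le (by positivity) hx
  have h3 : ∀ᵐ x ∂(mun n), ∑ e ∈ prs n, binEnt (W (x e.1) (x e.2))
      ≤ Real.logb 2 (Nat.card ↥(Q n) : ℝ) := by
    filter_upwards [h2] with x hx
    rwa [Real.le_logb_iff_rpow_le (by norm_num) hpos]
  have hbm : Measurable (fun p : ℝ × ℝ => binEnt (W p.1 p.2)) :=
    continuous_binEnt.measurable.comp hg.meas
  have hIntg : ∀ e ∈ prs n, Integrable (fun x : Fin n → ℝ => binEnt (W (x e.1) (x e.2))) (mun n) := by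
    intro e _
    have hpm : Measurable (fun x : Fin n → ℝ => (x e.1, x e.2)) :=
      (measurable_pi_apply _).prodMk (measurable_pi_apply _)
    exact bdd_integrable (hbm.comp hpm) fun x =>
      abs_le_of_mem01 ⟨binEnt_nonneg (hg.2.2 _ _), binEnt_le_one _⟩
  have h4 := integral_mono_ae (integrable_finset_sum _ hIntg) (integrable_const _) h3
  rw [integral_finset_sum _ hIntg, Finset.sum_congr rfl fun e he =>
    integral_coord_pair e.1 e.2 (mem_prs.1 he).ne (fun p => binEnt (W p.1 p.2)) hbm] at h4
  simp only [Finset.sum_const, nsmul_eq_mul, prs_card, ← graphonEnt_eq hg, integral_const,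
    probReal_univ, one_smul] at h4
  rw [← Real.le_logb_iff_rpow_le (by norm_num) hpos]
  linarith

theorem stmt11 (Q : GraphClass) (hQ : IsHereditary Q) (hne : (limitSet Q).Nonempty) :
    ∀ ε : ℝ, 0 < ε → ∃ N : ℕ, ∀ n ≥ N,
      (2 : ℝ) ^ ((sSup (graphonEnt '' limitSet Q) - ε) * choose2 n) ≤
          (Nat.card ↥(Q n) : ℝ) ∧
        (Nat.card ↥(Q n) : ℝ) ≤
          (2 : ℝ) ^ ((sSup (graphonEnt '' limitSet Q) + ε) * choose2 n) := by
  intro ε hε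
  have hbdd : BddAbove (graphonEnt '' limitSet Q) :=
    ⟨1, by rintro _ ⟨W, hW, rfl⟩; exact graphonEnt_le_one hW.1⟩
  obtain ⟨N, hN⟩ := upper Q hQ.1 (sSup (graphonEnt '' limitSet Q)) ε hε
    (fun W hW => le_csSup hbdd ⟨W, hW, rfl⟩)
  refine ⟨N, fun n hn => ⟨?_, hN n hn⟩⟩
  obtain ⟨_, ⟨W, hW, rfl⟩, hlt⟩ := exists_lt_of_lt_csSup (hne.image graphonEnt)
    (show sSup (graphonEnt '' limitSet Q) - ε < sSup (graphonEnt '' limitSet Q) by linarith)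
  refine le_trans ?_ (lower hQ n hW)
  refine Real.rpow_le_rpow_of_exponent_le (by norm_num) ?_
  refine mul_le_mul_of_nonneg_right hlt.le ?_
  rw [← prs_card]; positivity


end
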